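/- arXiv:1604.08191 — 11 statements merged into one kernel-verified Lean document; each statement's English description precedes it below -/
import Mathlib

section
/- Let C be a finite set of candidates, L an axis (a linear order) on C, and v a weak order on C that is single-peaked with respect to L. Then the most-preferred candidate of v is unique, every indifference class of v contains at most two candidates, and whenever two distinct candidates are tied in v, one lies strictly to the left of the peak of v on L and the other strictly to the right. -/
open scoped Classical

section Defs

variable {C : Type*}

/-- Strict preference: `a` is strictly preferred to `b` in the vote `v`. -/
def SPref (v : C → C → Prop) (a b : C) : Prop := v a b ∧ ¬ v b a

/-- Indifference (a tie) between `a` and `b` in the vote `v`. -/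
def Indiff (v : C → C → Prop) (a b : C) : Prop := v a b ∧ v b a

/-- A weak order: a complete (hence reflexive) and transitive binary relation. -/
def IsWeakOrder (v : C → C → Prop) : Prop := (∀ a b, v a b ∨ v b a) ∧ Transitive v

/-- A total (linear) order: an antisymmetric weak order. -/
def IsTotalOrderRel (v : C → C → Prop) : Prop :=
  IsWeakOrder v ∧ ∀ a b, v a b → v b a → a = b

/-- A top order: a weak order all of whose ties are within the least-preferred
indifference class. -/
def IsTopOrder (v : C → C → Prop) : Prop :=
  IsWeakOrder v ∧ ∀ a b, a ≠ b → Indiff v a b → ∀ c, v c a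

/-- `c` is among the most preferred candidates of `v`. -/
def TopCand (v : C → C → Prop) (c : C) : Prop := ∀ d, v c d

/-- `v` is single-peaked w.r.t. the axis `A`: there is a peak `p` (which is then the
unique most preferred candidate) such that `v` is strictly increasing along the part of
the axis up to `p` and strictly decreasing along the part of the axis after `p`. -/
def IsSinglePeaked (A : LinearOrder C) (v : C → C → Prop) : Prop :=
  ∃ p : C, (∀ a b, A.lt a b → A.le b p → SPref v b a) ∧
           (∀ a b, A.le p a → A.lt a b → SPref v a b)

/-- `v` is single-plateaued w.r.t. the axis `A`: the axis splits into segments `X,Y,Z`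
where the interval `Y = [y₁, y₂]` consists exactly of the most preferred candidates,
`v` is strictly increasing along `X` and strictly decreasing along `Z`. -/
def IsSinglePlateaued (A : LinearOrder C) (v : C → C → Prop) : Prop :=
  ∃ y₁ y₂ : C, A.le y₁ y₂ ∧ (∀ c, (A.le y₁ c ∧ A.le c y₂) ↔ TopCand v c) ∧
    (∀ a b, A.lt a b → A.le b y₁ → SPref v b a) ∧
    (∀ a b, A.le y₂ a → A.lt a b → SPref v a b)

/-- `v` is possibly single-peaked w.r.t. the axis `A`: `v` is weakly increasing along
the axis up to some point `p` and weakly decreasing afterwards (so the most preferred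
candidates form an interval `Y` around `p`). -/
def IsPossiblySinglePeaked (A : LinearOrder C) (v : C → C → Prop) : Prop :=
  ∃ p : C, (∀ a b, A.lt a b → A.le b p → v b a) ∧
           (∀ a b, A.le p a → A.lt a b → v a b)

/-- `v` is single-peaked with outside options w.r.t. the axis `A`: the axis splits into
segments `O₁,X,Y,Z,O₂` where the inner interval `[l,r]` (split into `X`, the peak
`Y = {p}`, and `Z`) is single-peaked, every inner candidate is strictly preferred to
every outside candidate, and all outside candidates are mutually indifferent. -/
def IsSPOutsideOptions (A : LinearOrder C) (v : C → C → Prop) : Prop :=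
  ∃ l p r : C, A.le l p ∧ A.le p r ∧
    (∀ a b, A.le l a → A.lt a b → A.le b p → SPref v b a) ∧
    (∀ a b, A.le p a → A.lt a b → A.le b r → SPref v a b) ∧
    (∀ a b, A.le l a → A.le a r → ¬ (A.le l b ∧ A.le b r) → SPref v a b) ∧
    (∀ a b, ¬ (A.le l a ∧ A.le a r) → ¬ (A.le l b ∧ A.le b r) → Indiff v a b)

/-- The number of candidates strictly preferred to `c` (the `k_i` of `c`'s class). -/
noncomputable def aboveCount [Fintype C] (v : C → C → Prop) (c : C) : ℕ :=
  Nat.card {d : C // SPref v d c}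

/-- The size of `c`'s indifference class (including `c` itself). -/
noncomputable def tiedCount [Fintype C] (v : C → C → Prop) (c : C) : ℕ :=
  Nat.card {d : C // Indiff v d c}

/-- The number of indifference classes strictly below `c`'s class. -/
noncomputable def classesBelow [Fintype C] (v : C → C → Prop) (c : C) : ℕ :=
  Set.ncard ((fun d => aboveCount v d) '' {d : C | SPref v c d})

/-- An `m`-candidate scoring vector, indexed by positions `1..m`: `α 1 ≥ α 2 ≥ ... ≥ α m`. -/
def IsScoringVec (m : ℕ) (α : ℕ → ℕ) : Prop :=
  ∀ i j, 1 ≤ i → i ≤ j → j ≤ m → α j ≤ α i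

/-- The four scoring-rule extensions: min, max, round down, and average. -/
inductive ScoreExt : Type
  | emin | emax | eroundDown | eaverage

/-- The score of candidate `c` in a weak-order vote `v` under the scoring vector `α`
(for `m` candidates) with scoring-rule extension `E`: writing the vote as indifference
classes `G₁ > ... > G_r` and `k_i = |G₁| + ... + |G_{i-1}|`, a candidate in `G_i` scores
`α (k_i + |G_i|)` under min, `α (k_i + 1)` under max, `α (m - r + i)` under round down,
and `(α (k_i + 1) + ... + α (k_i + |G_i|)) / |G_i|` under average. -/
noncomputable def extScore [Fintype C] (m : ℕ) (α : ℕ → ℕ) (E : ScoreExt)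
    (v : C → C → Prop) (c : C) : ℚ :=
  match E with
  | .emin => α (aboveCount v c + tiedCount v c)
  | .emax => α (aboveCount v c + 1)
  | .eroundDown => α (m - classesBelow v c)
  | .eaverage =>
      (∑ j ∈ Finset.Icc (aboveCount v c + 1) (aboveCount v c + tiedCount v c), (α j : ℚ))
        / (tiedCount v c : ℚ)

/-- The total weighted score of candidate `c` for a weighted profile `S`
(a list of weight/vote pairs). -/
noncomputable def profScore [Fintype C] (m : ℕ) (α : ℕ → ℕ) (E : ScoreExt)
    (S : List (ℕ × (C → C → Prop))) (c : C) : ℚ :=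
  (S.map (fun wv => (wv.1 : ℚ) * extScore m α E wv.2 c)).sum

/-- The total weight of the voters in `S` strictly preferring `a` to `b`. -/
noncomputable def prefWeight (S : List (ℕ × (C → C → Prop))) (a b : C) : ℕ :=
  (S.map (fun wv => if SPref wv.2 a b then wv.1 else 0)).sum

end Defs

/-- For a weak order `v` on a finite candidate set that is single-peaked
w.r.t. an axis `A`: the most preferred candidate is unique, every indifference class
contains at most two candidates, and any two distinct tied candidates lie strictly on
opposite sides of the peak on the axis. -/
theorem singlePeaked_unique_peak_ties {C : Type*} [Fintype C] (A : LinearOrder C)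
    (v : C → C → Prop) (hv : IsWeakOrder v) (hsp : IsSinglePeaked A v) :
    (∃! c : C, TopCand v c) ∧
    (∀ a b c : C, a ≠ b → b ≠ c → a ≠ c →
      Indiff v a b → Indiff v b c → False) ∧
    (∀ pk : C, TopCand v pk → ∀ a b : C, a ≠ b → Indiff v a b →
      (A.lt a pk ∧ A.lt pk b) ∨ (A.lt b pk ∧ A.lt pk a)) := by
  obtain ⟨hcomp, htrans⟩ := hv
  obtain ⟨p, hinc, hdec⟩ := hsp
  have hrefl (a : C) : v a a := (hcomp a a).elim id id
  have hpeak (a : C) (ha : a ≠ p) : SPref v p a :=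
    (lt_or_gt_of_ne ha).elim (fun h => hinc a p h le_rfl) (fun h => hdec p a le_rfl h)
  have htop : TopCand v p := fun a => by
    by_cases ha : a = p
    · exact ha ▸ hrefl a
    · exact (hpeak a ha).1
  have huniq (c : C) (hc : TopCand v c) : c = p := by
    by_contra h
    exact (hpeak c h).2 (hc p)
  have hsides_of_lt (a b : C) (hab : a < b) (h : Indiff v a b) : a < p ∧ p < b :=
    ⟨lt_of_not_ge fun hpa => (hdec a b hpa hab).2 h.2,
      lt_of_not_ge fun hbp => (hinc a b hab hbp).2 h.1⟩
  have hsides (a b : C) (hab : a ≠ b) (h : Indiff v a b) :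
      (a < p ∧ p < b) ∨ (b < p ∧ p < a) :=
    (lt_or_gt_of_ne hab).imp (fun hlt => hsides_of_lt a b hlt h)
      (fun hlt => hsides_of_lt b a hlt h.symm)
  refine ⟨⟨p, htop, huniq⟩, fun a b c hab hbc hac h₁ h₂ => ?_, fun pk hpk a b hab h => ?_⟩
  · have h₃ : Indiff v a c := ⟨htrans h₁.1 h₂.1, htrans h₂.2 h₁.2⟩
    rcases hsides a b hab h₁ with ⟨ha, hb⟩ | ⟨hb, ha⟩ <;>
      rcases hsides b c hbc h₂ with ⟨hb', hc⟩ | ⟨hc, hb'⟩ <;>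
      rcases hsides a c hac h₃ with ⟨ha', hc'⟩ | ⟨hc', ha'⟩ <;>
      order
  · exact huniq pk hpk ▸ hsides a b hab h
end

section
/- Let C be a finite set of candidates, L an axis on C, and v a weak order on C. Then v is possibly single-peaked with respect to L if and only if there exists a total (linear) order v' on C extending v (i.e., a > b in v implies a > b in v') that is single-peaked with respect to L. -/
open scoped Classical

/-- The order in which ties are broken around a peak `p`: the candidates up to `p` come first,
in decreasing axis order, followed by the candidates after `p` in increasing axis order. -/
def PeakTieBreak {C : Type*} (A : LinearOrder C) (p a b : C) : Prop :=
  (A.le a p ∧ (A.le b p → A.le b a)) ∨ (A.lt p a ∧ A.lt p b ∧ A.le a b)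

theorem isTotalOrderRel_peakTieBreak {C : Type*} (A : LinearOrder C) (p : C) :
    IsTotalOrderRel (PeakTieBreak A p) := by
  unfold IsTotalOrderRel IsWeakOrder Transitive PeakTieBreak
  refine ⟨⟨fun a b => ?_, fun a b c => ?_⟩, fun a b => ?_⟩
  all_goals
    grind

/-- Breaking the ties of a weak order by a total order yields a total order. -/
theorem IsWeakOrder.isTotalOrderRel_lex {C : Type*} {v t : C → C → Prop} (hv : IsWeakOrder v)
    (ht : IsTotalOrderRel t) : IsTotalOrderRel fun a b => v a b ∧ (v b a → t a b) := by
  obtain ⟨hc, htr⟩ := hv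
  obtain ⟨⟨tc, ttr⟩, tanti⟩ := ht
  refine ⟨⟨fun a b => ?_, fun a b c hab hbc => ⟨htr hab.1 hbc.1, fun hca => ?_⟩⟩,
    fun a b hab hba => tanti a b (hab.2 hba.1) (hba.2 hab.1)⟩
  · have := hc a b
    have := tc a b
    tauto
  · exact ttr (hab.2 (htr hbc.1 hca)) (hbc.2 (htr hca hab.1))

/-- A weak order `v` on a finite candidate set is possibly single-peaked
w.r.t. an axis `A` if and only if there is a total (linear) order `v'` extending `v`
(every strict preference of `v` is a strict preference of `v'`) that is single-peaked
w.r.t. `A`. -/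
theorem possiblySinglePeaked_iff_extension_singlePeaked
    {C : Type*} [Fintype C] (A : LinearOrder C) (v : C → C → Prop)
    (hv : IsWeakOrder v) :
    IsPossiblySinglePeaked A v ↔
      ∃ v' : C → C → Prop, IsTotalOrderRel v' ∧
        (∀ a b, SPref v a b → SPref v' a b) ∧ IsSinglePeaked A v' := by
  constructor
  · rintro ⟨p, hl, hr⟩
    refine ⟨_, hv.isTotalOrderRel_lex (isTotalOrderRel_peakTieBreak A p),
      fun a b hab => ⟨⟨hab.1, fun hba => absurd hba hab.2⟩, fun hba => hab.2 hba.1⟩,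
      p, fun a b hab hbp => ?_, fun a b hpa hab => ?_⟩
    · have hvba := hl a b hab hbp
      unfold SPref PeakTieBreak
      grind
    · have hvab := hr a b hpa hab
      unfold SPref PeakTieBreak
      grind
  · rintro ⟨v', -, hext, p, hl, hr⟩
    refine ⟨p, fun a b hab hbp => ?_, fun a b hpa hab => ?_⟩
    · by_contra h
      exact (hl a b hab hbp).2 (hext a b ⟨(hv.1 a b).resolve_right h, h⟩).1
    · by_contra h
      exact (hr a b hpa hab).2 (hext b a ⟨(hv.1 a b).resolve_left h, h⟩).1
end

section
/- Let C be a finite set of candidates, L an axis on C, and V a finite weighted collection of voters (each with a positive integer weight) whose votes are weak orders on C, each single-plateaued with respect to L. Then the weighted strict majority relation is transitive: for all distinct candidates a, b, c, if the total weight of voters strictly preferring a to b exceeds the total weight strictly preferring b to a, and the total weight strictly preferring b to c exceeds the total weight strictly preferring c to b, then the total weight strictly preferring a to c exceeds the total weight strictly preferring c to a. -/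
open scoped Classical

/-- If `m` lies strictly between `x` and `z` on the axis and `x` is weakly preferred to `m` in a
single-plateaued vote, then either `m` is strictly preferred to `z` or all three are tied. -/
lemma IsSinglePlateaued.sPref_or_tied {C : Type*} {A : LinearOrder C} {v : C → C → Prop}
    (hv : IsSinglePlateaued A v) {x m z : C}
    (hm : (A.lt x m ∧ A.lt m z) ∨ (A.lt z m ∧ A.lt m x)) (hxm : v x m) :
    SPref v m z ∨ (v m x ∧ v m z ∧ v z m) := by
  obtain ⟨y₁, y₂, -, htop, hinc, hdec⟩ := hv
  by_cases hl : A.le m y₁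
  · rcases hm with ⟨h, -⟩ | ⟨h, -⟩
    · exact absurd hxm (hinc x m h hl).2
    · exact Or.inl (hinc z m h hl)
  by_cases hr : A.le y₂ m
  · rcases hm with ⟨-, h⟩ | ⟨-, h⟩
    · exact Or.inl (hdec m z hr h)
    · exact absurd hxm (hdec m x hr h).2
  have hmtop : TopCand v m :=
    (htop m).1 ⟨(A.le_total m y₁).resolve_left hl, (A.le_total y₂ m).resolve_left hr⟩
  by_cases hz : v z m
  · exact Or.inr ⟨hmtop x, hmtop z, hz⟩
  · exact Or.inl ⟨hmtop z, hz⟩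

/-- If `m` lies strictly between `x` and `z` on the axis, then the majority margin of `x` over `m`
is at most that of `x` over `z`. -/
lemma prefWeight_add_le_of_between {C : Type*} (A : LinearOrder C)
    (V : List (ℕ × (C → C → Prop)))
    (hV : ∀ wv ∈ V, IsWeakOrder wv.2 ∧ IsSinglePlateaued A wv.2) {x m z : C}
    (hm : (A.lt x m ∧ A.lt m z) ∨ (A.lt z m ∧ A.lt m x)) :
    prefWeight V x m + prefWeight V z x ≤ prefWeight V x z + prefWeight V m x := by
  unfold prefWeight
  rw [← List.sum_map_add, ← List.sum_map_add]
  refine List.sum_le_sum fun wv hwv => ?_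
  obtain ⟨hw, hp⟩ := hV wv hwv
  have hx := hp.sPref_or_tied hm
  have hz := hp.sPref_or_tied (x := z) (m := m) (z := x) (by tauto)
  have hxmz := @hw.2 x m z
  have hzmx := @hw.2 z m x
  have hmzx := @hw.2 m z x
  have hzxm := @hw.2 z x m
  have hxz := hw.1 x z
  have hxm := hw.1 x m
  have hzm := hw.1 z m
  unfold SPref at *
  grind

/-- For a finite weighted collection `V` of voters (positive integer
weights) whose votes are weak orders each single-plateaued w.r.t. the axis `A`, the
weighted strict majority relation is transitive. -/
theorem singlePlateaued_majority_transitive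
    {C : Type*} [Fintype C] (A : LinearOrder C)
    (V : List (ℕ × (C → C → Prop)))
    (hV : ∀ wv ∈ V, 0 < wv.1 ∧ IsWeakOrder wv.2 ∧ IsSinglePlateaued A wv.2)
    (a b c : C) (hab : a ≠ b) (hbc : b ≠ c) (hac : a ≠ c)
    (h1 : prefWeight V b a < prefWeight V a b)
    (h2 : prefWeight V c b < prefWeight V b c) :
    prefWeight V c a < prefWeight V a c := by
  have hV' : ∀ wv ∈ V, IsWeakOrder wv.2 ∧ IsSinglePlateaued A wv.2 := fun wv h => (hV wv h).2
  have hmid : ((A.lt a b ∧ A.lt b c) ∨ (A.lt c b ∧ A.lt b a)) ∨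
      ((A.lt c a ∧ A.lt a b) ∨ (A.lt b a ∧ A.lt a c)) ∨
      ((A.lt b c ∧ A.lt c a) ∨ (A.lt a c ∧ A.lt c b)) := by
    have h_ab : A.lt a b ∨ A.lt b a := lt_or_gt_of_ne hab
    have h_bc : A.lt b c ∨ A.lt c b := lt_or_gt_of_ne hbc
    have h_ac : A.lt a c ∨ A.lt c a := lt_or_gt_of_ne hac
    tauto
  rcases hmid with h | h | h
  · have := prefWeight_add_le_of_between A V hV' h
    omega
  · have := prefWeight_add_le_of_between A V hV' h
    omega
  · have := prefWeight_add_le_of_between A V hV' h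
    omega
end

section
/- Let C be a nonempty finite set of candidates, L an axis on C, and V a finite weighted collection of voters (each with a positive integer weight) whose votes are weak orders on C, each single-plateaued with respect to L. Then a weak Condorcet winner exists: there is a candidate c such that for every candidate d ≠ c, the total weight of voters strictly preferring d to c is at most the total weight of voters strictly preferring c to d. -/
open scoped Classical

/-- Total weight of the entries of a list satisfying a predicate is monotone in the predicate. -/
lemma sum_map_ite_le_of_imp {ι : Type*} (V : List ι) (w : ι → ℕ) (p q : ι → Prop)
    [DecidablePred p] [DecidablePred q]
    (h : ∀ i ∈ V, p i → q i) :
    (V.map fun i => if p i then w i else 0).sum ≤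
      (V.map fun i => if q i then w i else 0).sum := by
  refine List.sum_le_sum fun i hi => ?_
  by_cases hp : p i
  · simp [hp, h i hi hp]
  · simp [hp]

/-- A weighted list of intervals `[lo i, hi i]` in a finite linear order has a median point. -/
lemma exists_weighted_interval_median {C ι : Type*} [LinearOrder C] [Finite C] [Nonempty C]
    (V : List ι) (w : ι → ℕ) (lo hi : ι → C) :
    ∃ c : C,
      (V.map fun i => if c < lo i then w i else 0).sum ≤
        (V.map fun i => if hi i ≤ c then w i else 0).sum ∧
      (V.map fun i => if hi i < c then w i else 0).sum ≤
        (V.map fun i => if c ≤ lo i then w i else 0).sum := by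
  let S : Set C := {c | (V.map fun i => if c < lo i then w i else 0).sum ≤
    (V.map fun i => if hi i ≤ c then w i else 0).sum}
  have hS : S.Nonempty := by
    obtain ⟨m, hm⟩ := Finite.exists_max (id : C → C)
    exact ⟨m, sum_map_ite_le_of_imp V w _ _ fun i _ hi => absurd hi (hm (lo i)).not_gt⟩
  obtain ⟨c, hcS, hc⟩ := Set.exists_min_image S id S.toFinite hS
  refine ⟨c, hcS, ?_⟩
  rcases (Set.Iio c).eq_empty_or_nonempty with he | hne
  · exact sum_map_ite_le_of_imp V w _ _ fun i _ hi =>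
      absurd (show _ ∈ Set.Iio c from hi) (by simp [he])
  · obtain ⟨b, hbc, hb⟩ := Set.exists_max_image (Set.Iio c) id (Set.toFinite _) hne
    have hbS : b ∉ S := fun h => (hc b h).not_gt hbc
    calc _ ≤ (V.map fun i => if hi i ≤ b then w i else 0).sum :=
          sum_map_ite_le_of_imp V w _ _ fun i _ h => hb _ h
      _ ≤ (V.map fun i => if b < lo i then w i else 0).sum := (not_le.mp hbS).le
      _ ≤ _ := sum_map_ite_le_of_imp V w _ _ fun i _ h =>
          not_lt.mp fun h' => (hb _ h').not_gt h

/-- For a nonempty finite candidate set and a finite weighted collection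
`V` of voters (positive integer weights) whose votes are weak orders each
single-plateaued w.r.t. the axis `A`, a weak Condorcet winner exists. -/
theorem singlePlateaued_weak_condorcet_winner_exists
    {C : Type*} [Fintype C] [Nonempty C] (A : LinearOrder C)
    (V : List (ℕ × (C → C → Prop)))
    (hV : ∀ wv ∈ V, 0 < wv.1 ∧ IsWeakOrder wv.2 ∧ IsSinglePlateaued A wv.2) :
    ∃ c : C, ∀ d : C, d ≠ c → prefWeight V d c ≤ prefWeight V c d := by
  choose! lo hi _ htop hinc hdec using fun wv h => (hV wv h).2.2
  obtain ⟨c, hright, hleft⟩ := exists_weighted_interval_median V Prod.fst lo hi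
  refine ⟨c, fun d hdc => ?_⟩
  have not_top : ∀ wv ∈ V, SPref wv.2 d c → lo wv ≤ c → ¬ c ≤ hi wv :=
    fun wv h hd h₁ h₂ => hd.2 ((htop wv h c).1 ⟨h₁, h₂⟩ d)
  rcases lt_or_gt_of_ne hdc with hlt | hgt
  · calc prefWeight V d c ≤ (V.map fun wv => if hi wv < c then wv.1 else 0).sum :=
          sum_map_ite_le_of_imp V Prod.fst _ _ fun wv h hd => not_le.mp fun hc =>
            (le_total (lo wv) c).elim (fun h₁ => not_top wv h hd h₁ hc)
              fun h₁ => hd.2 (hinc wv h d c hlt h₁).1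
      _ ≤ _ := hleft
      _ ≤ prefWeight V c d :=
          sum_map_ite_le_of_imp V Prod.fst _ _ fun wv h hc => hinc wv h d c hlt hc
  · calc prefWeight V d c ≤ (V.map fun wv => if c < lo wv then wv.1 else 0).sum :=
          sum_map_ite_le_of_imp V Prod.fst _ _ fun wv h hd => not_le.mp fun hc =>
            (le_total c (hi wv)).elim (fun h₂ => not_top wv h hd hc h₂)
              fun h₂ => hd.2 (hdec wv h c d h₂ hgt).1
      _ ≤ _ := hright
      _ ≤ prefWeight V c d :=
          sum_map_ite_le_of_imp V Prod.fst _ _ fun wv h hc => hdec wv h c d hc hgt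
end

section
/- Fix a finite candidate set C with |C| = m, an m-candidate scoring vector α, one of the four scoring-rule extensions (min, max, round down, average), an axis L on C, one of the four models (single-peaked, single-plateaued, possibly single-peaked, single-peaked with outside options), a preferred candidate p ∈ C, a weighted collection S of nonmanipulative weak-order voters, and a finite list of positive integer manipulator weights. If there exist weak-order votes for the manipulators, each satisfying the chosen model with respect to L, such that p is a winner (no candidate has strictly greater total weighted score under α with the chosen extension) of the election with voters S together with the manipulators, then there exist such manipulator votes, each satisfying the chosen model with respect to L and additionally ranking p uniquely first, such that p is a winner. -/
open scoped Classical

/-- The four models of single-peakedness for votes with ties. -/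
inductive SPModel : Type
  | sp | plat | poss | oo

/-- Whether a vote `v` satisfies the given model of single-peakedness w.r.t. axis `A`. -/
def SPModel.Sat {C : Type*} : SPModel → LinearOrder C → (C → C → Prop) → Prop
  | .sp, A, v => IsSinglePeaked A v
  | .plat, A, v => IsSinglePlateaued A v
  | .poss, A, v => IsPossiblySinglePeaked A v
  | .oo, A, v => IsSPOutsideOptions A v

section PromotedVote

variable {C : Type*}

/-- The number of candidates between `p` and `d` on the axis, endpoints included. -/
noncomputable def axisDist (A : LinearOrder C) (p d : C) : ℕ :=
  Set.ncard {x : C | (A.le p x ∧ A.le x d) ∨ (A.le d x ∧ A.le x p)}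

/-- The vote obtained from `v` by rearranging the candidates weakly preferred to `p`
according to their distance from `p` on the axis, leaving all other candidates in place. -/
def promote (A : LinearOrder C) (p : C) (v : C → C → Prop) (a b : C) : Prop :=
  (v a p ∧ v b p ∧ axisDist A p a ≤ axisDist A p b) ∨ (¬ v b p ∧ v a b)

theorem axisDist_lt_of_right [Finite C] (A : LinearOrder C) {p a b : C}
    (hpa : A.le p a) (hab : A.lt a b) : axisDist A p a < axisDist A p b := by
  apply Set.ncard_lt_ncard _ (Set.toFinite _)
  refine ⟨fun x hx => ?_, fun h => ?_⟩
  · simp only [Set.mem_ofPred_eq] at hx ⊢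
    grind
  · have hb := @h b (Or.inl ⟨by grind, by grind⟩)
    simp only [Set.mem_ofPred_eq] at hb
    grind

theorem axisDist_lt_of_left [Finite C] (A : LinearOrder C) {p a b : C}
    (hab : A.lt a b) (hbp : A.le b p) : axisDist A p b < axisDist A p a := by
  apply Set.ncard_lt_ncard _ (Set.toFinite _)
  refine ⟨fun x hx => ?_, fun h => ?_⟩
  · simp only [Set.mem_ofPred_eq] at hx ⊢
    grind
  · have ha := @h a (Or.inr ⟨by grind, by grind⟩)
    simp only [Set.mem_ofPred_eq] at ha
    grind

theorem axisDist_self_lt [Finite C] (A : LinearOrder C) {p d : C} (hd : d ≠ p) :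
    axisDist A p p < axisDist A p d := by
  rcases A.le_total p d with h | h
  · exact axisDist_lt_of_right A (by grind) (by grind)
  · exact axisDist_lt_of_left A (by grind) (by grind)

theorem IsWeakOrder.refl {v : C → C → Prop} (hv : IsWeakOrder v) (a : C) : v a a :=
  (hv.1 a a).elim id id

theorem isWeakOrder_promote (A : LinearOrder C) (p : C) {v : C → C → Prop}
    (hv : IsWeakOrder v) : IsWeakOrder (promote A p v) := by
  obtain ⟨ht, htr⟩ := hv
  have htr' : ∀ a b c, v a b → v b c → v a c := fun a b c => @htr a b c
  constructor
  · intro a b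
    have h₁ := ht a b
    have h₂ := ht a p
    have h₃ := ht b p
    have h₄ := htr' a p b
    have h₅ := htr' b p a
    have h₆ := Nat.le_total (axisDist A p a) (axisDist A p b)
    unfold promote
    tauto
  · intro a b c hab hbc
    rcases hab with ⟨ha, hb, hab⟩ | ⟨hb, hab⟩ <;> rcases hbc with ⟨hb', hc, hbc⟩ | ⟨hc, hbc⟩
    · exact Or.inl ⟨ha, hc, hab.trans hbc⟩
    · exact Or.inr ⟨hc, htr' a p c ha ((ht p c).resolve_right hc)⟩
    · exact (hb hb').elim
    · exact Or.inr ⟨hc, htr' a b c hab hbc⟩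

theorem promote_iff_of_not_right (A : LinearOrder C) {p d : C} {v : C → C → Prop}
    (hd : ¬ v d p) (x : C) : promote A p v x d ↔ v x d := by
  unfold promote
  tauto

theorem promote_iff_of_not_left (A : LinearOrder C) {p d : C} {v : C → C → Prop}
    (hv : IsWeakOrder v) (hd : ¬ v d p) (x : C) : promote A p v d x ↔ v d x := by
  have h := @hv.2 d x p
  unfold promote
  tauto

theorem sPref_promote_of_axisDist_lt (A : LinearOrder C) {p a b : C} {v : C → C → Prop}
    (ha : v a p) (hb : v b p) (h : axisDist A p a < axisDist A p b) :
    SPref (promote A p v) a b := by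
  refine ⟨Or.inl ⟨ha, hb, h.le⟩, ?_⟩
  rintro (⟨-, -, h'⟩ | ⟨h', -⟩)
  · omega
  · exact h' ha

theorem sPref_promote_of_not (A : LinearOrder C) {p a b : C} {v : C → C → Prop}
    (hv : IsWeakOrder v) (hb : ¬ v b p) (hab : v a p ∨ SPref v a b) :
    SPref (promote A p v) a b := by
  unfold SPref
  rw [promote_iff_of_not_right A hb, promote_iff_of_not_left A hv hb]
  rcases hab with h | h
  · have hpb := (hv.1 p b).resolve_right hb
    exact ⟨hv.2 h hpb, fun hba => hb (hv.2 hba h)⟩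
  · exact h

theorem sPref_promote_of_ne [Finite C] (A : LinearOrder C) {p d : C} {v : C → C → Prop}
    (hv : IsWeakOrder v) (hd : d ≠ p) : SPref (promote A p v) p d := by
  by_cases h : v d p
  · exact sPref_promote_of_axisDist_lt A (hv.refl p) h (axisDist_self_lt A hd)
  · exact sPref_promote_of_not A hv h (Or.inl (hv.refl p))

theorem sPref_promote_of_axisDist_lt_of_imp (A : LinearOrder C) {p a b : C}
    {v : C → C → Prop} (hv : IsWeakOrder v) (hlt : axisDist A p b < axisDist A p a)
    (h : ¬ v b p → SPref v b a) : SPref (promote A p v) b a := by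
  by_cases hb : v b p
  · by_cases ha : v a p
    · exact sPref_promote_of_axisDist_lt A hb ha hlt
    · exact sPref_promote_of_not A hv ha (Or.inl hb)
  · exact sPref_promote_of_not A hv (fun ha => hb (hv.2 (h hb).1 ha)) (Or.inr (h hb))

theorem promote_of_axisDist_lt_of_imp (A : LinearOrder C) {p a b : C}
    {v : C → C → Prop} (hv : IsWeakOrder v) (hlt : axisDist A p b < axisDist A p a)
    (h : ¬ v b p → v b a) : promote A p v b a := by
  by_cases hb : v b p
  · by_cases ha : v a p
    · exact Or.inl ⟨hb, ha, hlt.le⟩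
    · exact Or.inr ⟨ha, hv.2 hb ((hv.1 p a).resolve_right ha)⟩
  · exact Or.inr ⟨fun ha => hb (hv.2 (h hb) ha), h hb⟩

theorem isSinglePeaked_promote [Finite C] {A : LinearOrder C} (p : C) {v : C → C → Prop}
    (hv : IsWeakOrder v) (h : IsSinglePeaked A v) : IsSinglePeaked A (promote A p v) := by
  obtain ⟨q, hl, hr⟩ := h
  have hrefl := hv.refl p
  refine ⟨p, fun a b hab hbp => ?_, fun a b hpa hab => ?_⟩
  · refine sPref_promote_of_axisDist_lt_of_imp A hv (axisDist_lt_of_left A hab hbp) fun hb => ?_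
    refine hl a b hab (not_lt.1 fun hqb => hb ?_)
    rcases hbp.eq_or_lt with rfl | hlt
    · exact hrefl
    · exact (hr b p hqb.le hlt).1
  · refine sPref_promote_of_axisDist_lt_of_imp A hv (axisDist_lt_of_right A hpa hab) fun ha => ?_
    refine hr a b (not_lt.1 fun haq => ha ?_) hab
    rcases hpa.eq_or_lt with rfl | hlt
    · exact hrefl
    · exact (hl p a hlt haq.le).1

theorem isPossiblySinglePeaked_promote [Finite C] {A : LinearOrder C} (p : C)
    {v : C → C → Prop} (hv : IsWeakOrder v) (h : IsPossiblySinglePeaked A v) :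
    IsPossiblySinglePeaked A (promote A p v) := by
  obtain ⟨q, hl, hr⟩ := h
  have hrefl := hv.refl p
  refine ⟨p, fun a b hab hbp => ?_, fun a b hpa hab => ?_⟩
  · refine promote_of_axisDist_lt_of_imp A hv (axisDist_lt_of_left A hab hbp) fun hb => ?_
    refine hl a b hab (not_lt.1 fun hqb => hb ?_)
    rcases hbp.eq_or_lt with rfl | hlt
    · exact hrefl
    · exact hr b p hqb.le hlt
  · refine promote_of_axisDist_lt_of_imp A hv (axisDist_lt_of_right A hpa hab) fun ha => ?_
    refine hr a b (not_lt.1 fun haq => ha ?_) hab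
    rcases hpa.eq_or_lt with rfl | hlt
    · exact hrefl
    · exact hl p a hlt haq.le

theorem isSinglePlateaued_promote [Finite C] {A : LinearOrder C} (p : C)
    {v : C → C → Prop} (hv : IsWeakOrder v) (h : IsSinglePlateaued A v) :
    IsSinglePlateaued A (promote A p v) := by
  obtain ⟨y₁, y₂, -, htop, hl, hr⟩ := h
  have hrefl := hv.refl p
  refine ⟨p, p, le_rfl, fun c => ?_, fun a b hab hbp => ?_, fun a b hpa hab => ?_⟩
  · constructor
    · rintro ⟨h₁, h₂⟩ d
      obtain rfl := le_antisymm h₁ h₂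
      by_cases hd : d = p
      · exact hd ▸ (isWeakOrder_promote A _ hv).refl _
      · exact (sPref_promote_of_ne A hv hd).1
    · intro hc
      by_contra hne
      have : c ≠ p := by
        rintro rfl
        exact hne ⟨le_rfl, le_rfl⟩
      exact (sPref_promote_of_ne A hv this).2 (hc p)
  · refine sPref_promote_of_axisDist_lt_of_imp A hv (axisDist_lt_of_left A hab hbp) fun hb => ?_
    refine hl a b hab (not_lt.1 fun hyb => hb ?_)
    rcases hbp.eq_or_lt with rfl | hlt
    · exact hrefl
    · rcases le_total b y₂ with hby | hby
      · exact (htop b).1 ⟨hyb.le, hby⟩ p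
      · exact (hr b p hby hlt).1
  · refine sPref_promote_of_axisDist_lt_of_imp A hv (axisDist_lt_of_right A hpa hab) fun ha => ?_
    refine hr a b (not_lt.1 fun hay => ha ?_) hab
    rcases hpa.eq_or_lt with rfl | hlt
    · exact hrefl
    · rcases le_total y₁ a with hya | hya
      · exact (htop a).1 ⟨hya, hay.le⟩ p
      · exact (hl p a hlt hya).1

theorem isSPOutsideOptions_promote [Finite C] {A : LinearOrder C} (p : C)
    {v : C → C → Prop} (hv : IsWeakOrder v) (h : IsSPOutsideOptions A v) :
    IsSPOutsideOptions A (promote A p v) := by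
  obtain ⟨l, q, r, -, -, hl, hr, hio, hoo⟩ := h
  have hrefl := hv.refl p
  by_cases hp : A.le l p ∧ A.le p r
  · have hout : ∀ b, ¬ (A.le l b ∧ A.le b r) → ¬ v b p := fun b hb =>
      (hio p b hp.1 hp.2 hb).2
    refine ⟨l, p, r, hp.1, hp.2, fun a b hla hab hbp => ?_, fun a b hpa hab hbr => ?_,
      fun a b hla har hb => ?_, fun a b ha hb => ?_⟩
    · refine sPref_promote_of_axisDist_lt_of_imp A hv (axisDist_lt_of_left A hab hbp)
        fun hb => ?_
      refine hl a b hla hab (not_lt.1 fun hqb => hb ?_)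
      rcases hbp.eq_or_lt with rfl | hlt
      · exact hrefl
      · exact (hr b p hqb.le hlt hp.2).1
    · refine sPref_promote_of_axisDist_lt_of_imp A hv (axisDist_lt_of_right A hpa hab)
        fun ha => ?_
      refine hr a b (not_lt.1 fun haq => ha ?_) hab hbr
      rcases hpa.eq_or_lt with rfl | hlt
      · exact hrefl
      · exact (hl p a hp.1 hlt haq.le).1
    · exact sPref_promote_of_not A hv (hout b hb) (Or.inr (hio a b hla har hb))
    · unfold Indiff
      rw [promote_iff_of_not_right A (hout b hb), promote_iff_of_not_right A (hout a ha)]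
      exact hoo a b ha hb
  · have hall : ∀ d, v d p := fun d => by
      by_cases hd : A.le l d ∧ A.le d r
      · exact (hio d p hd.1 hd.2 hp).1
      · exact (hoo d p hd hp).1
    have : Nonempty C := ⟨p⟩
    obtain ⟨bot, hbot⟩ := Finite.exists_min (id : C → C)
    obtain ⟨top, htop⟩ := Finite.exists_max (id : C → C)
    refine ⟨bot, p, top, hbot p, htop p, fun a b _ hab hbp => ?_, fun a b hpa hab _ => ?_,
      fun a b _ _ hb => (hb ⟨hbot b, htop b⟩).elim,
      fun a b ha _ => (ha ⟨hbot a, htop a⟩).elim⟩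
    · exact sPref_promote_of_axisDist_lt A (hall b) (hall a) (axisDist_lt_of_left A hab hbp)
    · exact sPref_promote_of_axisDist_lt A (hall a) (hall b) (axisDist_lt_of_right A hpa hab)

theorem sat_promote [Finite C] {M : SPModel} {A : LinearOrder C} (p : C)
    {v : C → C → Prop} (hv : IsWeakOrder v) (h : M.Sat A v) : M.Sat A (promote A p v) := by
  cases M
  · exact isSinglePeaked_promote p hv h
  · exact isSinglePlateaued_promote p hv h
  · exact isPossiblySinglePeaked_promote p hv h
  · exact isSPOutsideOptions_promote p hv h

end PromotedVote

section Scores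

variable {C : Type*} [Fintype C]

theorem aboveCount_eq_ncard (v : C → C → Prop) (c : C) :
    aboveCount v c = {d | SPref v d c}.ncard := rfl

theorem tiedCount_eq_ncard (v : C → C → Prop) (c : C) :
    tiedCount v c = {d | Indiff v d c}.ncard := rfl

theorem aboveCount_add_tiedCount (v : C → C → Prop) (c : C) :
    aboveCount v c + tiedCount v c = {d | v d c}.ncard := by
  rw [aboveCount_eq_ncard, tiedCount_eq_ncard,
    ← Set.ncard_union_eq _ (Set.toFinite _) (Set.toFinite _)]
  · congr 1
    ext d
    simp only [Set.mem_union, Set.mem_ofPred_eq, SPref, Indiff]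
    tauto
  · rw [Set.disjoint_left]
    exact fun d h₁ h₂ => h₁.2 h₂.2

theorem aboveCount_add_tiedCount_le (v : C → C → Prop) (c : C) :
    aboveCount v c + tiedCount v c ≤ Fintype.card C := by
  rw [aboveCount_add_tiedCount, ← Nat.card_eq_fintype_card]
  exact Set.ncard_le_card _

theorem one_le_tiedCount {v : C → C → Prop} (hv : IsWeakOrder v) (c : C) :
    1 ≤ tiedCount v c :=
  (Set.ncard_pos (Set.toFinite _)).2 ⟨c, hv.refl c, hv.refl c⟩

theorem classesBelow_lt_card (v : C → C → Prop) (c : C) :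
    classesBelow v c < Fintype.card C := by
  refine (Set.ncard_image_le (Set.toFinite _)).trans_lt ?_
  rw [← Nat.card_eq_fintype_card, ← Set.ncard_univ]
  exact Set.ncard_lt_ncard ⟨Set.subset_univ _, fun h => (h (Set.mem_univ c)).2 (h (Set.mem_univ c)).1⟩
    (Set.toFinite _)

theorem average_le {α : ℕ → ℕ} {k t x : ℕ} (ht : 1 ≤ t)
    (h : ∀ j, k + 1 ≤ j → j ≤ k + t → α j ≤ x) :
    (∑ j ∈ Finset.Icc (k + 1) (k + t), (α j : ℚ)) / (t : ℚ) ≤ x := by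
  rw [div_le_iff₀ (by exact_mod_cast ht)]
  have := Finset.sum_le_card_nsmul (Finset.Icc (k + 1) (k + t)) (fun j => (α j : ℚ)) x
    fun j hj => by exact_mod_cast h j (Finset.mem_Icc.1 hj).1 (Finset.mem_Icc.1 hj).2
  have hc : k + t + 1 - (k + 1) = t := by omega
  simpa [hc, mul_comm] using this

theorem le_average {α : ℕ → ℕ} {k t x : ℕ} (ht : 1 ≤ t)
    (h : ∀ j, k + 1 ≤ j → j ≤ k + t → x ≤ α j) :
    (x : ℚ) ≤ (∑ j ∈ Finset.Icc (k + 1) (k + t), (α j : ℚ)) / (t : ℚ) := by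
  rw [le_div_iff₀ (by exact_mod_cast ht)]
  have := Finset.card_nsmul_le_sum (Finset.Icc (k + 1) (k + t)) (fun j => (α j : ℚ)) x
    fun j hj => by exact_mod_cast h j (Finset.mem_Icc.1 hj).1 (Finset.mem_Icc.1 hj).2
  have hc : k + t + 1 - (k + 1) = t := by omega
  simpa [hc, mul_comm] using this

theorem counts_eq_of_indiff {v : C → C → Prop} (hv : IsWeakOrder v) {a b : C}
    (hab : v a b) (hba : v b a) :
    aboveCount v a = aboveCount v b ∧ tiedCount v a = tiedCount v b := by
  have h₁ : ∀ d, v d a ↔ v d b := fun d => ⟨fun h => hv.2 h hab, fun h => hv.2 h hba⟩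
  have h₂ : ∀ d, v a d ↔ v b d := fun d => ⟨fun h => hv.2 hba h, fun h => hv.2 hab h⟩
  simp only [aboveCount, tiedCount, SPref, Indiff, h₁, h₂, and_self]

theorem aboveCount_add_tiedCount_le_aboveCount {v : C → C → Prop} (hv : IsWeakOrder v)
    {a b : C} (hab : SPref v a b) : aboveCount v a + tiedCount v a ≤ aboveCount v b := by
  rw [aboveCount_add_tiedCount, aboveCount_eq_ncard]
  exact Set.ncard_le_ncard (fun d hd => ⟨hv.2 hd hab.1, fun h => hab.2 (hv.2 h hd)⟩)
    (Set.toFinite _)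

theorem classesBelow_mono {v : C → C → Prop} (hv : IsWeakOrder v) {a b : C} (hab : v a b) :
    classesBelow v b ≤ classesBelow v a :=
  Set.ncard_le_ncard (Set.image_mono fun _ hd =>
    ⟨hv.2 hab hd.1, fun h => hd.2 (hv.2 h hab)⟩) (Set.toFinite _)

/-- A weakly preferred candidate scores at least as much. -/
theorem extScore_mono {α : ℕ → ℕ} (hα : IsScoringVec (Fintype.card C) α) (E : ScoreExt)
    {v : C → C → Prop} (hv : IsWeakOrder v) {a b : C} (hab : v a b) :
    extScore (Fintype.card C) α E v b ≤ extScore (Fintype.card C) α E v a := by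
  have ha := one_le_tiedCount hv a
  have hb := one_le_tiedCount hv b
  have hbm := aboveCount_add_tiedCount_le v b
  by_cases hba : v b a
  · obtain ⟨h₁, h₂⟩ := counts_eq_of_indiff hv hab hba
    have h₃ := le_antisymm (classesBelow_mono hv hab) (classesBelow_mono hv hba)
    cases E <;> simp only [extScore, h₁, h₂, h₃, le_refl]
  · have h := aboveCount_add_tiedCount_le_aboveCount hv ⟨hab, hba⟩
    cases E
    · exact Nat.cast_le.2 (hα _ _ (by omega) (by omega) (by omega))
    · exact Nat.cast_le.2 (hα _ _ (by omega) (by omega) (by omega))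
    · have h₁ := classesBelow_mono hv hab
      have h₂ := classesBelow_lt_card v a
      exact Nat.cast_le.2 (hα _ _ (by omega) (by omega) (by omega))
    · exact (average_le (x := α (aboveCount v b)) hb
        fun j h₁ h₂ => hα _ _ (by omega) (by omega) (by omega)).trans
        (le_average ha fun j h₁ h₂ => hα _ _ (by omega) (by omega) (by omega))

theorem aboveCount_promote (A : LinearOrder C) {p d : C} {v : C → C → Prop}
    (hv : IsWeakOrder v) (hd : ¬ v d p) : aboveCount (promote A p v) d = aboveCount v d := by
  simp only [aboveCount, SPref, promote_iff_of_not_right A hd, promote_iff_of_not_left A hv hd]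

theorem tiedCount_promote (A : LinearOrder C) {p d : C} {v : C → C → Prop}
    (hv : IsWeakOrder v) (hd : ¬ v d p) : tiedCount (promote A p v) d = tiedCount v d := by
  simp only [tiedCount, Indiff, promote_iff_of_not_right A hd, promote_iff_of_not_left A hv hd]

theorem classesBelow_promote (A : LinearOrder C) {p d : C} {v : C → C → Prop}
    (hv : IsWeakOrder v) (hd : ¬ v d p) :
    classesBelow (promote A p v) d = classesBelow v d := by
  simp only [classesBelow, SPref, promote_iff_of_not_right A hd, promote_iff_of_not_left A hv hd]
  congr 1
  exact Set.image_congr fun x hx => aboveCount_promote A hv fun h => hd (hv.2 hx.1 h)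

theorem extScore_promote_of_not (A : LinearOrder C) (m : ℕ) (α : ℕ → ℕ) (E : ScoreExt)
    {p d : C} {v : C → C → Prop} (hv : IsWeakOrder v) (hd : ¬ v d p) :
    extScore m α E (promote A p v) d = extScore m α E v d := by
  cases E <;> simp only [extScore, aboveCount_promote A hv hd, tiedCount_promote A hv hd,
    classesBelow_promote A hv hd]

theorem aboveCount_promote_self (A : LinearOrder C) (p : C) {v : C → C → Prop}
    (hv : IsWeakOrder v) : aboveCount (promote A p v) p = 0 := by
  rw [aboveCount_eq_ncard, Set.ncard_eq_zero (Set.toFinite _), Set.eq_empty_iff_forall_notMem]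
  intro d hd
  by_cases h : d = p
  · subst h
    exact hd.2 hd.1
  · exact hd.2 (sPref_promote_of_ne A hv h).1

theorem tiedCount_promote_self (A : LinearOrder C) (p : C) {v : C → C → Prop}
    (hv : IsWeakOrder v) : tiedCount (promote A p v) p = 1 := by
  rw [tiedCount_eq_ncard, Set.ncard_eq_one]
  refine ⟨p, Set.eq_singleton_iff_unique_mem.2 ⟨?_, fun d hd => ?_⟩⟩
  · have h := (isWeakOrder_promote A p hv).refl p
    exact ⟨h, h⟩
  · by_contra h
    exact (sPref_promote_of_ne A hv h).2 hd.1

theorem classesBelow_le_promote_self (A : LinearOrder C) (p : C) {v : C → C → Prop}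
    (hv : IsWeakOrder v) : classesBelow v p ≤ classesBelow (promote A p v) p := by
  refine Set.ncard_le_ncard ?_ (Set.toFinite _)
  rintro _ ⟨d, hd, rfl⟩
  exact ⟨d, sPref_promote_of_not A hv hd.2 (Or.inl (hv.refl p)), aboveCount_promote A hv hd.2⟩

theorem extScore_le_promote_self (A : LinearOrder C) {α : ℕ → ℕ}
    (hα : IsScoringVec (Fintype.card C) α) (E : ScoreExt) (p : C) {v : C → C → Prop}
    (hv : IsWeakOrder v) :
    extScore (Fintype.card C) α E v p ≤ extScore (Fintype.card C) α E (promote A p v) p := by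
  have ht := one_le_tiedCount hv p
  have hm := aboveCount_add_tiedCount_le v p
  cases E
  · simp only [extScore, aboveCount_promote_self A p hv, tiedCount_promote_self A p hv]
    exact Nat.cast_le.2 (hα _ _ (by omega) (by omega) (by omega))
  · simp only [extScore, aboveCount_promote_self A p hv]
    exact Nat.cast_le.2 (hα _ _ (by omega) (by omega) (by omega))
  · have h₁ := classesBelow_le_promote_self A p hv
    have h₂ := classesBelow_lt_card (promote A p v) p
    exact Nat.cast_le.2 (hα _ _ (by omega) (by omega) (by omega))
  · simp only [extScore, aboveCount_promote_self A p hv, tiedCount_promote_self A p hv]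
    exact (average_le (x := α 1) ht
      fun j h₁ h₂ => hα _ _ (by omega) (by omega) (by omega)).trans (by simp)

/-- Promoting `p` does not increase the score margin of any candidate over `p`. -/
theorem extScore_sub_promote_le (A : LinearOrder C) {α : ℕ → ℕ}
    (hα : IsScoringVec (Fintype.card C) α) (E : ScoreExt) (p d : C) {v : C → C → Prop}
    (hv : IsWeakOrder v) :
    extScore (Fintype.card C) α E (promote A p v) d -
        extScore (Fintype.card C) α E (promote A p v) p ≤
      extScore (Fintype.card C) α E v d - extScore (Fintype.card C) α E v p := by
  by_cases hd : v d p
  · have h₁ := extScore_mono hα E hv hd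
    have hpd : promote A p v p d := by
      by_cases h : d = p
      · exact h ▸ (isWeakOrder_promote A _ hv).refl _
      · exact (sPref_promote_of_ne A hv h).1
    have h₂ := extScore_mono hα E (isWeakOrder_promote A p hv) hpd
    linarith
  · have h := extScore_le_promote_self A hα E p hv
    rw [extScore_promote_of_not A _ α E hv hd]
    linarith

theorem profScore_append (m : ℕ) (α : ℕ → ℕ) (E : ScoreExt)
    (S T : List (ℕ × (C → C → Prop))) (c : C) :
    profScore m α E (S ++ T) c = profScore m α E S c + profScore m α E T c := by
  simp [profScore]

theorem profScore_cons (m : ℕ) (α : ℕ → ℕ) (E : ScoreExt) (w : ℕ) (v : C → C → Prop)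
    (S : List (ℕ × (C → C → Prop))) (c : C) :
    profScore m α E ((w, v) :: S) c = w * extScore m α E v c + profScore m α E S c := by
  simp [profScore]

theorem profScore_sub_promote_le (A : LinearOrder C) {α : ℕ → ℕ}
    (hα : IsScoringVec (Fintype.card C) α) (E : ScoreExt) (p d : C) (ws : List ℕ)
    (tv : List (C → C → Prop)) (htv : ∀ v ∈ tv, IsWeakOrder v) :
    profScore (Fintype.card C) α E (ws.zip (tv.map (promote A p))) d -
        profScore (Fintype.card C) α E (ws.zip (tv.map (promote A p))) p ≤
      profScore (Fintype.card C) α E (ws.zip tv) d -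
        profScore (Fintype.card C) α E (ws.zip tv) p := by
  induction ws generalizing tv with
  | nil => simp
  | cons w ws ih =>
    cases tv with
    | nil => simp
    | cons v tv =>
      simp only [List.map_cons, List.zip_cons_cons, profScore_cons]
      have h₁ := ih tv fun u hu => htv u (List.mem_cons_of_mem _ hu)
      have h₂ := mul_le_mul_of_nonneg_left
        (extScore_sub_promote_le A hα E p d (htv v List.mem_cons_self)) (Nat.cast_nonneg (α := ℚ) w)
      linarith

end Scores

/-- If the preferred candidate `p` can be made a winner (under an
`m`-candidate scoring vector `α` with scoring-rule extension `E`) by weak-order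
manipulator votes each satisfying the chosen single-peakedness model `M` w.r.t. the
axis `A`, then `p` can be made a winner by such manipulator votes that additionally
all rank `p` uniquely first. -/
theorem manipulators_can_rank_p_first
    {C : Type*} [Fintype C] (A : LinearOrder C) (M : SPModel)
    (m : ℕ) (hm : m = Fintype.card C) (α : ℕ → ℕ) (hα : IsScoringVec m α)
    (E : ScoreExt) (p : C)
    (S : List (ℕ × (C → C → Prop)))
    (hS : ∀ wv ∈ S, 0 < wv.1 ∧ IsWeakOrder wv.2)
    (ws : List ℕ) (hws : ∀ w ∈ ws, 0 < w)
    (hex : ∃ tv : List (C → C → Prop), tv.length = ws.length ∧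
      (∀ v ∈ tv, IsWeakOrder v ∧ SPModel.Sat M A v) ∧
      (∀ d : C, profScore m α E (S ++ ws.zip tv) d ≤ profScore m α E (S ++ ws.zip tv) p)) :
    ∃ tv : List (C → C → Prop), tv.length = ws.length ∧
      (∀ v ∈ tv, IsWeakOrder v ∧ SPModel.Sat M A v ∧ (∀ d : C, d ≠ p → SPref v p d)) ∧
      (∀ d : C, profScore m α E (S ++ ws.zip tv) d ≤ profScore m α E (S ++ ws.zip tv) p) := by
  subst hm
  obtain ⟨tv, hlen, hsat, hwin⟩ := hex
  refine ⟨tv.map (promote A p), by simpa using hlen, ?_, fun d => ?_⟩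
  · intro v hv
    obtain ⟨u, hu, rfl⟩ := List.mem_map.1 hv
    obtain ⟨huw, hus⟩ := hsat u hu
    exact ⟨isWeakOrder_promote A p huw, sat_promote p huw hus,
      fun d hd => sPref_promote_of_ne A huw hd⟩
  · have h₁ := hwin d
    have h₂ := profScore_sub_promote_le A hα E p d ws tv fun v hv => (hsat v hv).1
    rw [profScore_append, profScore_append] at h₁ ⊢
    linarith
end

section
/- Let C be a finite set of candidates with |C| ≥ 2, L an axis on C, and v a weak order on C that is single-plateaued with respect to L and has at least two indifference classes. Then the least-preferred indifference class of v is a subset of {the L-minimum candidate of C, the L-maximum candidate of C}. In particular this holds for every weak order single-peaked with respect to L. -/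
open scoped Classical

/-- If `v` is strictly increasing along the axis up to `y`, then a least-preferred candidate
located at or before `y` is the minimum of the axis. -/
theorem axis_le_of_bottom_of_increasing {C : Type*} (A : LinearOrder C) {v : C → C → Prop}
    {y c : C} (hinc : ∀ a b, A.lt a b → A.le b y → SPref v b a) (hbot : ∀ d, v d c)
    (hcy : A.le c y) (d : C) : A.le c d :=
  not_lt.mp fun hdc => (hinc d c hdc hcy).2 (hbot d)

/-- If `v` is strictly decreasing along the axis from `y` on, then a least-preferred candidate
located at or after `y` is the maximum of the axis. -/
theorem axis_ge_of_bottom_of_decreasing {C : Type*} (A : LinearOrder C) {v : C → C → Prop}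
    {y c : C} (hdec : ∀ a b, A.le y a → A.lt a b → SPref v a b) (hbot : ∀ d, v d c)
    (hyc : A.le y c) (d : C) : A.le d c :=
  not_lt.mp fun hcd => (hdec c d hyc hcd).2 (hbot d)

/-- For a finite candidate set with at least two candidates, an axis `A`,
and a weak order `v` that is single-plateaued w.r.t. `A` and has at least two
indifference classes (i.e., some candidate is strictly preferred to some other), every
candidate in the least-preferred indifference class is the `A`-minimum or the
`A`-maximum of the candidate set.  In particular this holds for every weak order that
is single-peaked w.r.t. `A`. -/
theorem singlePlateaued_bottom_class_at_axis_ends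
    {C : Type*} [Fintype C] (h2 : 2 ≤ Fintype.card C) (A : LinearOrder C) :
    (∀ v : C → C → Prop, IsWeakOrder v → IsSinglePlateaued A v →
      (∃ x y : C, SPref v x y) →
      ∀ c : C, (∀ d, v d c) → (∀ d, A.le c d) ∨ (∀ d, A.le d c)) ∧
    (∀ v : C → C → Prop, IsWeakOrder v → IsSinglePeaked A v →
      (∃ x y : C, SPref v x y) →
      ∀ c : C, (∀ d, v d c) → (∀ d, A.le c d) ∨ (∀ d, A.le d c)) := by
  constructor
  · rintro v ⟨-, htrans⟩ ⟨y₁, y₂, -, htop, hinc, hdec⟩ ⟨x, y, hxy⟩ c hbot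
    rcases A.le_total c y₁ with h₁ | h₁
    · exact Or.inl (axis_le_of_bottom_of_increasing A hinc hbot h₁)
    rcases A.le_total y₂ c with h₂ | h₂
    · exact Or.inr (axis_ge_of_bottom_of_decreasing A hdec hbot h₂)
    · exact absurd (htrans (hbot y) ((htop c).mp ⟨h₁, h₂⟩ x)) hxy.2
  · rintro v - ⟨p, hinc, hdec⟩ - c hbot
    exact (A.le_total c p).imp (axis_le_of_bottom_of_increasing A hinc hbot)
      (axis_ge_of_bottom_of_decreasing A hdec hbot)
end

section
/- Let C be a finite set of m candidates and L an axis on C. Let c_1, c_2, ..., c_m be an enumeration of C such that for every i, the candidate c_i is either the L-minimum or the L-maximum of the set {c_i, c_{i+1}, ..., c_m}. Then the total order c_m > c_{m−1} > ... > c_1 (the reverse of the elimination order) is single-peaked with respect to L. -/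
open scoped Classical

/-- Let `e : Fin m ≃ C` enumerate the `m ≥ 1` candidates so that for
every `i`, candidate `e i` is the `A`-minimum or the `A`-maximum of
`{e i, e (i+1), ..., e (m-1)}` (an elimination order).  Then the total order ranking
`e (m-1) > e (m-2) > ... > e 0` (the reverse of the elimination order) is single-peaked
w.r.t. the axis `A`. -/
theorem reverse_elimination_order_singlePeaked
    {C : Type*} [Fintype C] (A : LinearOrder C) (m : ℕ) (hm : m = Fintype.card C)
    (hm1 : 1 ≤ m) (e : Fin m ≃ C)
    (helim : ∀ i : Fin m,
      (∀ j : Fin m, i ≤ j → A.le (e i) (e j)) ∨ (∀ j : Fin m, i ≤ j → A.le (e j) (e i))) :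
    IsSinglePeaked A (fun x y => e.symm y ≤ e.symm x) := by
  let top : Fin m := ⟨m - 1, by omega⟩
  have le_top (i : Fin m) : i ≤ top := Fin.le_def.2 (Nat.le_sub_one_of_lt i.isLt)
  have symm_eq_top {b : C} (h : b = e top) : e.symm b = top := by simp [h]
  refine ⟨e top, fun a b hab hbp => ?_, fun a b hpa hab => ?_⟩
  · suffices h : e.symm a < e.symm b from ⟨h.le, not_le.2 h⟩
    by_contra! hba
    rcases helim (e.symm b) with h | h
    · have hle := h _ hba
      simp only [Equiv.apply_symm_apply] at hle
      exact (A.lt_iff_le_not_ge _ _).1 hab |>.2 hle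
    · have hpb := h _ (le_top _)
      simp only [Equiv.apply_symm_apply] at hpb
      have hb := symm_eq_top (A.le_antisymm _ _ hbp hpb)
      have heq : a = b := e.symm.injective (le_antisymm (hb ▸ le_top _) hba)
      exact (A.lt_iff_le_not_ge _ _).1 hab |>.2 (heq ▸ A.le_refl _)
  · suffices h : e.symm b < e.symm a from ⟨h.le, not_le.2 h⟩
    by_contra! hba
    rcases helim (e.symm a) with h | h
    · have hap := h _ (le_top _)
      simp only [Equiv.apply_symm_apply] at hap
      have ha := symm_eq_top (A.le_antisymm _ _ hap hpa)
      have heq : b = a := e.symm.injective (le_antisymm (ha ▸ le_top _) hba)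
      exact (A.lt_iff_le_not_ge _ _).1 hab |>.2 (heq ▸ A.le_refl _)
    · have hle := h _ hba
      simp only [Equiv.apply_symm_apply] at hle
      exact (A.lt_iff_le_not_ge _ _).1 hab |>.2 hle
end

section
/- Let C be a finite set of candidates, L an axis on C, and v a weak order on C that is single-plateaued with respect to L. Define total orders v1 and v2 by breaking every tie of v in increasing and decreasing order of L respectively: if a ~_v b and a is to the left of b on L then a >_{v1} b and b >_{v2} a, and v1, v2 agree with v on all strict preferences. Then: (1) v1 and v2 are total orders single-peaked with respect to L; and (2) for all distinct candidates a, b, the combined net margin of v1 and v2 equals twice the net margin of v, i.e., ([a >_{v1} b] + [a >_{v2} b]) − ([b >_{v1} a] + [b >_{v2} a]) = 2·([a >_v b] − [b >_v a]), where [·] is 1 if the preference holds and 0 otherwise. -/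
open scoped Classical

section TieBreaking

variable {C : Type*} {v w : C → C → Prop}

/-- Breaking the ties of a weak order along an axis yields a total order. -/
theorem IsWeakOrder.isTotalOrderRel_of_tieBreak (A : LinearOrder C) (hv : IsWeakOrder v)
    (hw : ∀ x y, w x y ↔ (SPref v x y ∨ (Indiff v x y ∧ A.le x y))) :
    IsTotalOrderRel w := by
  obtain ⟨htotal, htrans⟩ := hv
  refine ⟨⟨fun a b => ?_, fun a b c hab hbc => ?_⟩, fun a b hab hba => ?_⟩
  · have := htotal a b
    have := A.le_total a b
    simp only [hw, SPref, Indiff]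
    tauto
  · rw [hw] at hab hbc ⊢
    have hac : v a b → v b c → v a c := fun h h' => htrans h h'
    have hcb : v c a → v a b → v c b := fun h h' => htrans h h'
    have hba : v b c → v c a → v b a := fun h h' => htrans h h'
    have hle : A.le a b → A.le b c → A.le a c := A.le_trans a b c
    simp only [SPref, Indiff] at *
    tauto
  · rw [hw] at hab hba
    have hle : A.le a b → A.le b a → a = b := A.le_antisymm a b
    simp only [SPref, Indiff] at *
    tauto

/-- Strict preference after breaking ties along an axis. -/
theorem sPref_tieBreak_iff (A : LinearOrder C)
    (hw : ∀ x y, w x y ↔ (SPref v x y ∨ (Indiff v x y ∧ A.le x y))) (a b : C) :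
    SPref w a b ↔ SPref v a b ∨ (Indiff v a b ∧ A.lt a b) := by
  have hlt : A.lt a b ↔ A.le a b ∧ ¬ A.le b a := A.lt_iff_le_not_ge a b
  rw [SPref, hw, hw, hlt]
  simp only [SPref, Indiff]
  tauto

/-- Breaking the ties of a single-plateaued weak order in increasing order of the axis
yields a single-peaked order, whose peak is the left end of the plateau. -/
theorem IsSinglePlateaued.isSinglePeaked_of_tieBreak {A : LinearOrder C}
    (hsp : IsSinglePlateaued A v)
    (hw : ∀ x y, w x y ↔ (SPref v x y ∨ (Indiff v x y ∧ A.le x y))) :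
    IsSinglePeaked A w := by
  obtain ⟨y₁, y₂, -, htop, hinc, hdec⟩ := hsp
  refine ⟨y₁, fun a b hab hb => (sPref_tieBreak_iff A hw b a).2 (.inl (hinc a b hab hb)),
    fun a b ha hab => (sPref_tieBreak_iff A hw a b).2 ?_⟩
  rcases A.le_total y₂ a with h | h
  · exact .inl (hdec a b h hab)
  have hatop : TopCand v a := (htop a).1 ⟨ha, h⟩
  by_cases hba : v b a
  · exact .inr ⟨⟨hatop b, hba⟩, hab⟩
  · exact .inl ⟨hatop b, hba⟩

/-- The axis `A` read from right to left. -/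
abbrev reverseAxis (A : LinearOrder C) : LinearOrder C := @OrderDual.instLinearOrder C A

/-- Reversing the axis preserves single-plateauedness. -/
theorem IsSinglePlateaued.dual {A : LinearOrder C} (h : IsSinglePlateaued A v) :
    IsSinglePlateaued (reverseAxis A) v := by
  obtain ⟨y₁, y₂, hle, htop, hinc, hdec⟩ := h
  exact ⟨y₂, y₁, hle, fun c => and_comm.trans (htop c),
    fun a b hab hb => hdec b a hb hab, fun a b ha hab => hinc b a hab ha⟩

/-- An order single-peaked with respect to the reversed axis is single-peaked. -/
theorem IsSinglePeaked.of_dual {A : LinearOrder C}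
    (h : IsSinglePeaked (reverseAxis A) v) :
    IsSinglePeaked A v := by
  obtain ⟨p, hinc, hdec⟩ := h
  exact ⟨p, fun a b hab hb => hdec b a hb hab, fun a b ha hab => hinc b a hab ha⟩

end TieBreaking

/-- Let `v` be a weak order single-plateaued w.r.t. the axis `A`, and let
`v1` (resp. `v2`) be obtained from `v` by breaking every tie in increasing (resp.
decreasing) order of the axis.  Then `v1` and `v2` are total orders single-peaked
w.r.t. `A`, and for all distinct candidates `a, b` the combined net margin of `v1` and
`v2` equals twice the net margin of `v`. -/
theorem tie_breaking_singlePeaked_and_margins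
    {C : Type*} [Fintype C] (A : LinearOrder C) (v v1 v2 : C → C → Prop)
    (hv : IsWeakOrder v) (hsp : IsSinglePlateaued A v)
    (hv1 : ∀ x y, v1 x y ↔ (SPref v x y ∨ (Indiff v x y ∧ A.le x y)))
    (hv2 : ∀ x y, v2 x y ↔ (SPref v x y ∨ (Indiff v x y ∧ A.le y x))) :
    (IsTotalOrderRel v1 ∧ IsTotalOrderRel v2 ∧
      IsSinglePeaked A v1 ∧ IsSinglePeaked A v2) ∧
    (∀ a b : C, a ≠ b →
      ((if SPref v1 a b then (1 : ℤ) else 0) + (if SPref v2 a b then 1 else 0))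
          - ((if SPref v1 b a then 1 else 0) + (if SPref v2 b a then 1 else 0))
        = 2 * ((if SPref v a b then 1 else 0) - (if SPref v b a then 1 else 0))) := by
  have hv2' : ∀ x y, v2 x y ↔
      (SPref v x y ∨ (Indiff v x y ∧ (reverseAxis A).le x y)) := hv2
  refine ⟨⟨hv.isTotalOrderRel_of_tieBreak A hv1,
    hv.isTotalOrderRel_of_tieBreak (reverseAxis A) hv2',
    hsp.isSinglePeaked_of_tieBreak hv1,
    (hsp.dual.isSinglePeaked_of_tieBreak hv2').of_dual⟩, fun a b _ => ?_⟩
  have hs2 : ∀ x y, SPref v2 x y ↔ SPref v x y ∨ (Indiff v x y ∧ A.lt y x) :=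
    sPref_tieBreak_iff (reverseAxis A) hv2'
  simp only [sPref_tieBreak_iff A hv1, hs2]
  have hsymm : Indiff v b a ↔ Indiff v a b := and_comm
  rw [hsymm]
  by_cases hi : Indiff v a b
  · have h₁ : ¬ SPref v a b := fun h => h.2 hi.2
    have h₂ : ¬ SPref v b a := fun h => h.2 hi.1
    simp [hi, h₁, h₂]
    ring
  · simp only [hi, false_and, or_false]
    ring
end

section
/- Let C be a finite set of candidates with |C| ≥ 2, L an axis on C, and p a candidate that is the L-minimum or the L-maximum of C. Then there is exactly one weak order v on C that ranks p uniquely first and is single-plateaued with respect to L (equivalently, single-peaked with respect to L), namely the total order that ranks p first and the remaining candidates strictly according to their position on the axis (in order of increasing distance from p along L). -/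
open scoped Classical

/-- A candidate ranked uniquely first is the only most preferred candidate. -/
theorem topCand_iff_eq_of_rankedFirst {C : Type*} {v : C → C → Prop} (hv : IsWeakOrder v)
    {p : C} (hp : ∀ d, d ≠ p → SPref v p d) (c : C) : TopCand v c ↔ c = p := by
  constructor
  · intro hc
    by_contra hne
    exact (hp c hne).2 (hc p)
  · rintro rfl d
    by_cases hd : d = c
    · subst hd
      exact (hv.1 d d).elim id id
    · exact (hp d hd).1

/-- If `p` is ranked uniquely first, a single-peaked vote has its peak at `p`. -/
theorem isSinglePeaked_iff_of_rankedFirst {C : Type*} (A : LinearOrder C) {v : C → C → Prop}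
    {p : C} (hp : ∀ d, d ≠ p → SPref v p d) :
    IsSinglePeaked A v ↔
      (∀ a b, A.lt a b → A.le b p → SPref v b a) ∧
        (∀ a b, A.le p a → A.lt a b → SPref v a b) := by
  refine ⟨?_, fun h => ⟨p, h⟩⟩
  rintro ⟨q, hl, hr⟩
  obtain rfl : q = p := by
    by_contra hne
    rcases lt_or_gt_of_ne hne with h | h
    · exact (hr q p le_rfl h).2 (hp q hne).1
    · exact (hl p q h le_rfl).2 (hp q hne).1
  exact ⟨hl, hr⟩

/-- If `p` is ranked uniquely first, a single-plateaued vote has the plateau `{p}`, so it is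
the same as a single-peaked vote. -/
theorem isSinglePlateaued_iff_isSinglePeaked_of_rankedFirst {C : Type*} (A : LinearOrder C)
    {v : C → C → Prop} (hv : IsWeakOrder v) {p : C} (hp : ∀ d, d ≠ p → SPref v p d) :
    IsSinglePlateaued A v ↔ IsSinglePeaked A v := by
  rw [isSinglePeaked_iff_of_rankedFirst A hp]
  have htop := topCand_iff_eq_of_rankedFirst hv hp
  constructor
  · rintro ⟨y₁, y₂, hy, hY, hl, hr⟩
    obtain rfl : y₁ = p := (htop y₁).1 ((hY y₁).1 ⟨le_rfl, hy⟩)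
    obtain rfl : y₂ = y₁ := (htop y₂).1 ((hY y₂).1 ⟨hy, le_rfl⟩)
    exact ⟨hl, hr⟩
  · rintro ⟨hl, hr⟩
    refine ⟨p, p, le_rfl, fun c => ?_, hl, hr⟩
    rw [htop c]
    exact ⟨fun h => le_antisymm h.2 h.1, fun h => h ▸ ⟨le_rfl, le_rfl⟩⟩

/-- A weak order that is strictly decreasing along a linear order is that order. -/
theorem iff_le_of_forall_lt_sPref {C : Type*} (A : LinearOrder C) {v : C → C → Prop}
    (hv : IsWeakOrder v) (h : ∀ a b, A.lt a b → SPref v a b) (x y : C) : v x y ↔ A.le x y := by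
  constructor
  · intro hxy
    by_contra hle
    exact (h y x (not_le.1 hle)).2 hxy
  · intro hle
    rcases eq_or_lt_of_le hle with rfl | hlt
    · exact (hv.1 x x).elim id id
    · exact (h x y hlt).1

/-- A weak order that is strictly increasing along a linear order is its dual. -/
theorem iff_ge_of_forall_lt_sPref {C : Type*} (A : LinearOrder C) {v : C → C → Prop}
    (hv : IsWeakOrder v) (h : ∀ a b, A.lt a b → SPref v b a) (x y : C) : v x y ↔ A.le y x := by
  constructor
  · intro hxy
    by_contra hle
    exact (h x y (not_le.1 hle)).2 hxy
  · intro hle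
    rcases eq_or_lt_of_le hle with rfl | hlt
    · exact (hv.1 y y).elim id id
    · exact (h y x hlt).1

/-- The increasing axis order is a weak order. -/
theorem isWeakOrder_le {C : Type*} (A : LinearOrder C) : IsWeakOrder (fun x y => A.le x y) :=
  ⟨fun a b => A.le_total a b, fun a b c => A.le_trans a b c⟩

/-- The decreasing axis order is a weak order. -/
theorem isWeakOrder_ge {C : Type*} (A : LinearOrder C) : IsWeakOrder (fun x y => A.le y x) :=
  ⟨fun a b => A.le_total b a, fun a b c hab hbc => A.le_trans c b a hbc hab⟩

/-- For a finite candidate set with at least two candidates, an axis `A`,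
and a candidate `p` that is the `A`-minimum or the `A`-maximum, there is exactly one
weak order that ranks `p` uniquely first and is single-plateaued w.r.t. `A`
(equivalently, single-peaked w.r.t. `A`), namely the total order ranking `p` first and
the remaining candidates strictly by their position on the axis (in increasing axis
order if `p` is the `A`-minimum, in decreasing axis order if `p` is the `A`-maximum). -/
theorem unique_singlePlateaued_vote_with_p_first_at_axis_end
    {C : Type*} [Fintype C] (h2 : 2 ≤ Fintype.card C) (A : LinearOrder C)
    (p : C) (hp : (∀ d, A.le p d) ∨ (∀ d, A.le d p)) :
    (∃! v : C → C → Prop,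
      IsWeakOrder v ∧ (∀ d, d ≠ p → SPref v p d) ∧ IsSinglePlateaued A v) ∧
    (∀ v : C → C → Prop, IsWeakOrder v → (∀ d, d ≠ p → SPref v p d) →
      (IsSinglePlateaued A v ↔ IsSinglePeaked A v)) ∧
    (∀ v : C → C → Prop, IsWeakOrder v → (∀ d, d ≠ p → SPref v p d) →
      IsSinglePlateaued A v →
      ∀ x y, v x y ↔
        (((∀ d, A.le p d) → A.le x y) ∧ ((∀ d, A.le d p) → A.le y x))) := by
  have hnot : ¬ ((∀ d, A.le p d) ∧ (∀ d, A.le d p)) := by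
    rintro ⟨hmin, hmax⟩
    obtain ⟨d, hd⟩ := Fintype.exists_ne_of_one_lt_card h2 p
    exact hd (le_antisymm (hmax d) (hmin d))
  have hpeak : ∀ v : C → C → Prop, IsWeakOrder v → (∀ d, d ≠ p → SPref v p d) →
      (IsSinglePlateaued A v ↔ IsSinglePeaked A v) :=
    fun v hv hf => isSinglePlateaued_iff_isSinglePeaked_of_rankedFirst A hv hf
  have hchar : ∀ v : C → C → Prop, IsWeakOrder v → (∀ d, d ≠ p → SPref v p d) →
      IsSinglePlateaued A v →
      ∀ x y, v x y ↔
        (((∀ d, A.le p d) → A.le x y) ∧ ((∀ d, A.le d p) → A.le y x)) := by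
    intro v hv hf hpl x y
    obtain ⟨hl, hr⟩ := (isSinglePeaked_iff_of_rankedFirst A hf).1 ((hpeak v hv hf).1 hpl)
    rcases hp with hmin | hmax
    · have hmax : ¬ ∀ d, A.le d p := fun h => hnot ⟨hmin, h⟩
      rw [iff_le_of_forall_lt_sPref A hv (fun a b => hr a b (hmin a)) x y]
      exact ⟨fun h => ⟨fun _ => h, fun h' => absurd h' hmax⟩, fun h => h.1 hmin⟩
    · have hmin : ¬ ∀ d, A.le p d := fun h => hnot ⟨h, hmax⟩
      rw [iff_ge_of_forall_lt_sPref A hv (fun a b hab => hl a b hab (hmax b)) x y]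
      exact ⟨fun h => ⟨fun h' => absurd h' hmin, fun _ => h⟩, fun h => h.2 hmax⟩
  refine ⟨existsUnique_of_exists_of_unique ?_ ?_, hpeak, hchar⟩
  · rcases hp with hmin | hmax
    · have hf : ∀ d, d ≠ p → SPref (fun x y => A.le x y) p d :=
        fun d hd => ⟨hmin d, fun h => hd (le_antisymm h (hmin d))⟩
      refine ⟨_, isWeakOrder_le A, hf, (hpeak _ (isWeakOrder_le A) hf).2 ⟨p, ?_, ?_⟩⟩
      · intro a b hab hbp
        exact absurd (hab.trans_le hbp) (not_lt.2 (hmin a))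
      · intro a b _ hab
        exact ⟨hab.le, not_le.2 hab⟩
    · have hf : ∀ d, d ≠ p → SPref (fun x y => A.le y x) p d :=
        fun d hd => ⟨hmax d, fun h => hd (le_antisymm (hmax d) h)⟩
      refine ⟨_, isWeakOrder_ge A, hf, (hpeak _ (isWeakOrder_ge A) hf).2 ⟨p, ?_, ?_⟩⟩
      · intro a b hab _
        exact ⟨hab.le, not_le.2 hab⟩
      · intro a b hpa hab
        exact absurd (hpa.trans_lt hab) (not_lt.2 (hmax b))
  · rintro v w ⟨hv, hvf, hvp⟩ ⟨hw, hwf, hwp⟩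
    funext x y
    exact propext ((hchar v hv hvf hvp x y).trans (hchar w hw hwf hwp x y).symm)
end

section
/- Let k_1, ..., k_t be positive integers with Σ_{i=1}^t k_i = 2K, K ≥ 1. Consider candidates C = {a_1, p, b_1, b_2, b_3}, the axis a_1 L p L b_1 L b_2 L b_3, and the scoring vector ⟨4,3,2,0,0⟩ (each candidate in position i of a total order scores the i-th entry). The nonmanipulators are one voter of weight 20K voting a_1 > p > b_1 > b_2 > b_3 and one voter of weight 8K voting b_1 > b_2 > b_3 > p > a_1. The manipulators have weights 4k_1, ..., 4k_t. Then there exist total-order votes for the manipulators, each single-peaked with respect to the axis, such that p is a winner (no candidate has strictly greater total weighted score) if and only if there exists a subset I ⊆ {1,...,t} with Σ_{i∈I} k_i = K. -/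
open scoped Classical

/-- The scoring vector `⟨4,3,2,0,0⟩`, indexed by positions `1,...,5`. -/
def scvec : ℕ → ℕ := fun i => [0, 4, 3, 2, 0, 0].getD i 0

/-- The candidates: `a₁` is `0`, `p` is `1`, `b₁` is `2`, `b₂` is `3`, `b₃` is `4`;
the axis is the natural order `a₁ L p L b₁ L b₂ L b₃` on `Fin 5`.
The vote `a₁ > p > b₁ > b₂ > b₃`. -/
def voteA : Fin 5 → Fin 5 → Prop := fun x y => x ≤ y

/-- The vote `b₁ > b₂ > b₃ > p > a₁` (given via its rank function). -/
def voteB : Fin 5 → Fin 5 → Prop := fun x y => (![4, 3, 0, 1, 2] x : ℕ) ≤ ![4, 3, 0, 1, 2] y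

/-- The score of candidate `c` in a total-order vote `v` under the scoring vector `α`:
the candidate in position `i` scores `α i`. -/
noncomputable def scoreTO {C : Type*} [Fintype C] (α : ℕ → ℕ) (v : C → C → Prop) (c : C) : ℕ :=
  α (aboveCount v c + 1)

/-- The total weighted score of candidate `c` in a weighted profile of total orders. -/
noncomputable def profScoreTO {C : Type*} [Fintype C] (α : ℕ → ℕ)
    (S : List (ℕ × (C → C → Prop))) (c : C) : ℕ :=
  (S.map (fun wv => wv.1 * scoreTO α wv.2 c)).sum

lemma aboveCount_eq_sum {C : Type*} [Fintype C] (v : C → C → Prop) (c : C) :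
    aboveCount v c = ∑ d, if SPref v d c then 1 else 0 := by
  rw [aboveCount, Nat.card_eq_fintype_card, Fintype.card_subtype, Finset.card_filter]

/-- The vote induced by an injective rank function is a total order. -/
lemma isTotalOrderRel_of_injective {C : Type*} {r : C → ℕ} (hr : Function.Injective r) :
    IsTotalOrderRel (fun x y => r x ≤ r y) :=
  ⟨⟨fun a b => le_total (r a) (r b), fun _ _ _ hab hbc => le_trans hab hbc⟩,
    fun _ _ hab hba => hr (le_antisymm hab hba)⟩

lemma sPref_rank_iff {C : Type*} (r : C → ℕ) (a b : C) :
    SPref (fun x y => r x ≤ r y) a b ↔ r a < r b := by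
  unfold SPref
  lia

lemma scoreTO_rank {C : Type*} [Fintype C] (α : ℕ → ℕ) (r : C → ℕ) (c : C) :
    scoreTO α (fun x y => r x ≤ r y) c = α ((∑ d, if r d < r c then 1 else 0) + 1) := by
  simp only [scoreTO, aboveCount_eq_sum, sPref_rank_iff]

lemma scoreTO_voteA (c : Fin 5) : scoreTO scvec voteA c = ![4, 3, 2, 0, 0] c := by
  have h : voteA = fun x y : Fin 5 => (x : ℕ) ≤ (y : ℕ) := rfl
  rw [h, scoreTO_rank, Fin.sum_univ_five]
  fin_cases c <;> simp [scvec]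

lemma scoreTO_voteB (c : Fin 5) : scoreTO scvec voteB c = ![0, 0, 4, 3, 2] c := by
  unfold voteB
  rw [scoreTO_rank, Fin.sum_univ_five]
  fin_cases c <;> simp [scvec]

/-- The rank function of the vote `p > a₁ > b₁ > b₂ > b₃`. -/
def rankLeft : Fin 5 → ℕ := ![1, 0, 2, 3, 4]

/-- The rank function of the vote `p > b₁ > b₂ > b₃ > a₁`. -/
def rankRight : Fin 5 → ℕ := ![4, 0, 1, 2, 3]

lemma rankLeft_injective : Function.Injective rankLeft := by decide

lemma rankRight_injective : Function.Injective rankRight := by decide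

lemma scoreTO_rankLeft (c : Fin 5) :
    scoreTO scvec (fun x y => rankLeft x ≤ rankLeft y) c = ![3, 4, 2, 0, 0] c := by
  rw [scoreTO_rank, Fin.sum_univ_five]
  fin_cases c <;> simp [scvec, rankLeft]

lemma scoreTO_rankRight (c : Fin 5) :
    scoreTO scvec (fun x y => rankRight x ≤ rankRight y) c = ![0, 4, 3, 2, 0] c := by
  rw [scoreTO_rank, Fin.sum_univ_five]
  fin_cases c <;> simp [scvec, rankRight]

lemma isSinglePeaked_rankLeft :
    IsSinglePeaked (inferInstance : LinearOrder (Fin 5))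
      (fun x y => rankLeft x ≤ rankLeft y) := by
  refine ⟨1, ?_⟩
  simp only [sPref_rank_iff]
  change (∀ a b : Fin 5, a < b → b ≤ 1 → rankLeft b < rankLeft a) ∧
    (∀ a b : Fin 5, 1 ≤ a → a < b → rankLeft a < rankLeft b)
  decide

lemma isSinglePeaked_rankRight :
    IsSinglePeaked (inferInstance : LinearOrder (Fin 5))
      (fun x y => rankRight x ≤ rankRight y) := by
  refine ⟨1, ?_⟩
  simp only [sPref_rank_iff]
  change (∀ a b : Fin 5, a < b → b ≤ 1 → rankRight b < rankRight a) ∧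
    (∀ a b : Fin 5, 1 ≤ a → a < b → rankRight a < rankRight b)
  decide

lemma scvec_advantage_of_lt {m n : ℕ} (h : m < n) (k : ℕ) :
    4 * scvec (n + 1) + 1 ≤ k + 3 * scvec (m + 1) + 7 := by
  rcases lt_or_ge n 5 with hn | hn
  · interval_cases n <;> interval_cases m <;> simp [scvec]
  · have : scvec (n + 1) = 0 := List.getD_eq_default _ _ (by simpa using hn)
    lia

/-- The only single-peaked votes maximizing the combined advantage
`(p - a₁) + 3 (p - b₁)` are `p > a₁ > b₁ > ⋯` and `p > b₁ > b₂ > ⋯`. -/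
lemma score_trichotomy {v : Fin 5 → Fin 5 → Prop} (hv : IsTotalOrderRel v)
    (hsp : IsSinglePeaked (inferInstance : LinearOrder (Fin 5)) v) :
    (scoreTO scvec v 0 = 3 ∧ scoreTO scvec v 1 = 4 ∧ scoreTO scvec v 2 = 2) ∨
    (scoreTO scvec v 0 = 0 ∧ scoreTO scvec v 1 = 4 ∧ scoreTO scvec v 2 = 3) ∨
    4 * scoreTO scvec v 1 + 1 ≤ scoreTO scvec v 0 + 3 * scoreTO scvec v 2 + 7 := by
  obtain ⟨⟨htot, htrans⟩, hanti⟩ := hv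
  obtain ⟨q, hl, hr⟩ := hsp
  change ∀ a b : Fin 5, a < b → b ≤ q → SPref v b a at hl
  change ∀ a b : Fin 5, q ≤ a → a < b → SPref v a b at hr
  have irrefl : ∀ a, ¬ SPref v a a := fun a h => h.2 h.1
  have asymm : ∀ a b, SPref v a b → ¬ SPref v b a := fun a b h h' => h.2 h'.1
  have total : ∀ a b, a ≠ b → ¬ SPref v a b → SPref v b a := by
    intro a b hab h
    unfold SPref at *
    grind
  have trans : ∀ a b c, SPref v a b → SPref v b c → SPref v a c := fun a b c hab hbc =>
    ⟨htrans hab.1 hbc.1, fun hca => hab.2 (htrans hbc.1 hca)⟩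
  simp only [scoreTO, aboveCount_eq_sum, Fin.sum_univ_five, irrefl, if_false]
  have novalley : ∀ a b c : Fin 5, a < b → b < c → SPref v b a ∨ SPref v b c :=
    fun a b c hab hbc => (le_total b q).imp (hl a b hab) fun h => hr b c h hbc
  have h0 : SPref v 0 1 → SPref v 1 2 := fun h =>
    (novalley 0 1 2 (by decide) (by decide)).resolve_left (asymm 0 1 h)
  have h2 : ∀ c, 2 < c → SPref v 1 2 → SPref v 2 c := fun c hc h =>
    (novalley 1 2 c (by decide) hc).resolve_left (asymm 1 2 h)
  clear htot htrans hanti hl hr novalley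
  by_cases h12 : SPref v 1 2
  · have h23 := h2 3 (by decide) h12
    have h24 := h2 4 (by decide) h12
    have h13 := trans 1 2 3 h12 h23
    have h14 := trans 1 2 4 h12 h24
    by_cases h01 : SPref v 0 1
    · have h02 := trans 0 1 2 h01 h12
      have h03 := trans 0 1 3 h01 h13
      have h04 := trans 0 1 4 h01 h14
      simp [*, scvec]
    · have h10 := total 0 1 (by decide) h01
      by_cases h02 : SPref v 0 2
      · have h03 := trans 0 2 3 h02 h23
        have h04 := trans 0 2 4 h02 h24
        simp [*, scvec]
      · have h20 := total 0 2 (by decide) h02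
        by_cases h30 : SPref v 3 0 <;> by_cases h40 : SPref v 4 0 <;> simp [*, scvec]
  · have h21 := total 1 2 (by decide) h12
    have h10 := total 0 1 (by decide) (fun h => h12 (h0 h))
    have h31 := fun h => trans 3 2 1 h h21
    have h41 := fun h => trans 4 2 1 h h21
    have h02 := asymm 2 0 (trans 2 1 0 h21 h10)
    refine Or.inr (Or.inr (scvec_advantage_of_lt ?_ _))
    simp only [h02, h12, h21, if_true, if_false]
    split_ifs <;> lia

lemma profScoreTO_profile {t : ℕ} (ks : Fin t → ℕ) (K : ℕ)
    (tv : Fin t → Fin 5 → Fin 5 → Prop) (d : Fin 5) :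
    profScoreTO scvec
        ([(20 * K, voteA), (8 * K, voteB)] ++ List.ofFn (fun i => (4 * ks i, tv i))) d =
      20 * K * ![4, 3, 2, 0, 0] d + 8 * K * ![0, 0, 4, 3, 2] d +
        4 * ∑ i, ks i * scoreTO scvec (tv i) d := by
  simp [profScoreTO, scoreTO_voteA, scoreTO_voteB, List.map_ofFn, List.sum_ofFn,
    Finset.mul_sum, mul_assoc, add_assoc]

/-- With nonmanipulators of weight `20K` voting `a₁ > p > b₁ > b₂ > b₃`
and of weight `8K` voting `b₁ > b₂ > b₃ > p > a₁`, and manipulators of weights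
`4k₁, ..., 4kₜ` (where `k₁ + ... + kₜ = 2K`, `K ≥ 1`, each `kᵢ > 0`), the manipulators
can cast total-order votes, single-peaked w.r.t. the axis `a₁ L p L b₁ L b₂ L b₃`, that
make `p` a winner under the scoring vector `⟨4,3,2,0,0⟩` iff some subcollection of the
`kᵢ` sums to `K`. -/
theorem manipulation_43200_total_orders_iff_partition
    (t : ℕ) (ks : Fin t → ℕ) (hks : ∀ i, 0 < ks i) (K : ℕ) (hK : 1 ≤ K)
    (hsum : ∑ i, ks i = 2 * K) :
    (∃ tv : Fin t → (Fin 5 → Fin 5 → Prop),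
      (∀ i, IsTotalOrderRel (tv i) ∧
        IsSinglePeaked (inferInstance : LinearOrder (Fin 5)) (tv i)) ∧
      (∀ d : Fin 5,
        profScoreTO scvec
            ([(20 * K, voteA), (8 * K, voteB)] ++ List.ofFn (fun i => (4 * ks i, tv i))) d ≤
          profScoreTO scvec
            ([(20 * K, voteA), (8 * K, voteB)] ++ List.ofFn (fun i => (4 * ks i, tv i)))
            (1 : Fin 5))) ↔
    (∃ I : Finset (Fin t), ∑ i ∈ I, ks i = K) := by
  simp only [profScoreTO_profile]
  constructor
  · rintro ⟨tv, hvote, hwin⟩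
    have h0 := hwin 0
    have h2 := hwin 2
    simp only [Matrix.cons_val] at h0 h2
    have htri := fun i => score_trichotomy (hvote i).1 (hvote i).2
    generalize hs : (fun i d => scoreTO scvec (tv i) d) = s
    replace hs : ∀ i d, scoreTO scvec (tv i) d = s i d := fun i d => by rw [← hs]
    simp only [hs] at h0 h2 htri
    have hle : ∀ i ∈ Finset.univ, 4 * (ks i * s i 1) ≤
        ks i * s i 0 + 3 * (ks i * s i 2) + 7 * ks i := fun i _ => by
      have : 4 * s i 1 ≤ s i 0 + 3 * s i 2 + 7 := by have := htri i; lia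
      nlinarith
    have hsums : ∑ i, (ks i * s i 0 + 3 * (ks i * s i 2) + 7 * ks i) ≤
        ∑ i, 4 * (ks i * s i 1) := by
      simp only [Finset.sum_add_distrib, ← Finset.mul_sum, hsum]
      lia
    have heq := (Finset.sum_eq_sum_iff_of_le hle).1 ((Finset.sum_le_sum hle).antisymm hsums)
    have hdich : ∀ i, (s i 0 = 3 ∧ s i 1 = 4 ∧ s i 2 = 2) ∨
        (s i 0 = 0 ∧ s i 1 = 4 ∧ s i 2 = 3) := fun i => by
      have h := heq i (Finset.mem_univ i)
      have hpos := hks i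
      rcases htri i with h' | h' | h'
      · exact Or.inl h'
      · exact Or.inr h'
      · nlinarith
    refine ⟨Finset.univ.filter (fun i => s i 0 = 3), ?_⟩
    rw [Finset.sum_filter]
    have e0 : ∑ i, ks i * s i 0 = 3 * ∑ i, if s i 0 = 3 then ks i else 0 := by
      rw [Finset.mul_sum]
      exact Finset.sum_congr rfl fun i _ => by rcases hdich i with h | h <;> simp [h, mul_comm]
    have e1 : ∑ i, ks i * s i 1 = 4 * (2 * K) := by
      rw [← hsum, Finset.mul_sum]
      exact Finset.sum_congr rfl fun i _ => by rcases hdich i with h | h <;> simp [h, mul_comm]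
    have e2 : ∑ i, ks i * s i 2 + (∑ i, if s i 0 = 3 then ks i else 0) = 3 * (2 * K) := by
      rw [← hsum, Finset.mul_sum, ← Finset.sum_add_distrib]
      exact Finset.sum_congr rfl fun i _ => by rcases hdich i with h | h <;> simp [h] <;> ring
    lia
  · rintro ⟨I, hI⟩
    refine ⟨fun i => if i ∈ I then fun x y => rankLeft x ≤ rankLeft y
      else fun x y => rankRight x ≤ rankRight y, fun i => ?_, fun d => ?_⟩
    · dsimp only
      split_ifs
      · exact ⟨isTotalOrderRel_of_injective rankLeft_injective, isSinglePeaked_rankLeft⟩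
      · exact ⟨isTotalOrderRel_of_injective rankRight_injective, isSinglePeaked_rankRight⟩
    · have hcompl : ∑ i ∈ Iᶜ, ks i = K := by
        have := Finset.sum_add_sum_compl I ks
        lia
      have hscore : ∀ c, ∑ i, ks i * scoreTO scvec (if i ∈ I
          then fun x y => rankLeft x ≤ rankLeft y
          else fun x y => rankRight x ≤ rankRight y) c =
          K * ![3, 4, 2, 0, 0] c + K * ![0, 4, 3, 2, 0] c := fun c => by
        rw [← Finset.sum_add_sum_compl I]
        congr 1
        · rw [← hI, Finset.sum_mul]
          exact Finset.sum_congr rfl fun i hi => by rw [if_pos hi, scoreTO_rankLeft]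
        · rw [← hcompl, Finset.sum_mul]
          exact Finset.sum_congr rfl fun i hi => by
            rw [if_neg (Finset.mem_compl.1 hi), scoreTO_rankRight]
      rw [hscore, hscore]
      fin_cases d <;> simp <;> lia
end

section
/- Let k_1, ..., k_t be positive integers with Σ_{i=1}^t k_i = 2K, K ≥ 1. Consider candidates C = {a_1, p, b_1, b_2, b_3}, the axis a_1 L p L b_1 L b_2 L b_3, and the scoring vector ⟨4,3,2,0,0⟩. The nonmanipulators are one voter of weight 20K voting a_1 > p > b_1 > b_2 > b_3 and one voter of weight 8K voting b_1 > b_2 > b_3 > p > a_1. The manipulators have weights 4k_1, ..., 4k_t. Fix the scoring-rule extension E to be one of max, round down, or average. Then there exist weak-order votes for the manipulators, each single-peaked with respect to the axis, such that p is a winner (no candidate has strictly greater total weighted score under ⟨4,3,2,0,0⟩ with extension E) if and only if there exists a subset I ⊆ {1,...,t} with Σ_{i∈I} k_i = K. -/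
open scoped Classical

/-- The vote in which candidates with a smaller rank are preferred. -/
def rankVote (f : Fin 5 → Fin 5) : Fin 5 → Fin 5 → Prop := fun x y => f x ≤ f y

/-- The number of candidates of strictly smaller rank than `c`. -/
def rankAbove (f : Fin 5 → Fin 5) (c : Fin 5) : ℕ :=
  (Finset.univ.filter fun d => f d < f c).card

/-- The number of candidates of the same rank as `c`. -/
def rankTied (f : Fin 5 → Fin 5) (c : Fin 5) : ℕ :=
  (Finset.univ.filter fun d => f d = f c).card

/-- The number of indifference classes of strictly larger rank than `c`. -/
def rankBelow (f : Fin 5 → Fin 5) (c : Fin 5) : ℕ :=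
  ((Finset.univ.filter fun d => f c < f d).image (rankAbove f)).card

/-- The computable counterpart of `extScore` for votes given by a rank function. -/
def rankScore (E : ScoreExt) (f : Fin 5 → Fin 5) (c : Fin 5) : ℚ :=
  match E with
  | .emin => scvec (rankAbove f c + rankTied f c)
  | .emax => scvec (rankAbove f c + 1)
  | .eroundDown => scvec (5 - rankBelow f c)
  | .eaverage =>
      (∑ j ∈ Finset.Icc (rankAbove f c + 1) (rankAbove f c + rankTied f c), (scvec j : ℚ))
        / (rankTied f c : ℚ)

theorem spref_rankVote (f : Fin 5 → Fin 5) (a b : Fin 5) :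
    SPref (rankVote f) a b ↔ f a < f b := by
  simp only [SPref, rankVote, not_le]
  exact ⟨fun h => h.2, fun h => ⟨h.le, h⟩⟩

theorem indiff_rankVote (f : Fin 5 → Fin 5) (a b : Fin 5) :
    Indiff (rankVote f) a b ↔ f a = f b :=
  le_antisymm_iff.symm

theorem aboveCount_rankVote (f : Fin 5 → Fin 5) : aboveCount (rankVote f) = rankAbove f := by
  funext c
  simp only [aboveCount, rankAbove, spref_rankVote]
  rw [Nat.card_eq_fintype_card, Fintype.card_subtype]

theorem tiedCount_rankVote (f : Fin 5 → Fin 5) : tiedCount (rankVote f) = rankTied f := by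
  funext c
  simp only [tiedCount, rankTied, indiff_rankVote]
  rw [Nat.card_eq_fintype_card, Fintype.card_subtype]

theorem classesBelow_rankVote (f : Fin 5 → Fin 5) :
    classesBelow (rankVote f) = rankBelow f := by
  funext c
  simp only [classesBelow, rankBelow, spref_rankVote, aboveCount_rankVote]
  rw [← Set.ncard_coe_finset]
  congr 1
  ext n
  simp

theorem extScore_rankVote (E : ScoreExt) (f : Fin 5 → Fin 5) (c : Fin 5) :
    extScore 5 scvec E (rankVote f) c = rankScore E f c := by
  cases E <;> simp only [extScore, rankScore, aboveCount_rankVote, tiedCount_rankVote,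
    classesBelow_rankVote]

theorem isWeakOrder_rankVote (f : Fin 5 → Fin 5) : IsWeakOrder (rankVote f) :=
  ⟨fun a b => le_total (f a) (f b), fun _ _ _ hab hbc => le_trans hab hbc⟩

/-- Every weak order on five candidates is given by a rank function. -/
theorem IsWeakOrder.exists_rankVote {v : Fin 5 → Fin 5 → Prop} (hv : IsWeakOrder v) :
    ∃ f, v = rankVote f := by
  obtain ⟨htot, htrans⟩ := hv
  let above (c : Fin 5) : Finset (Fin 5) := Finset.univ.filter fun d => SPref v d c
  have hmem (c d : Fin 5) : d ∈ above c ↔ v d c ∧ ¬ v c d :=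
    Finset.mem_filter.trans (and_iff_right (Finset.mem_univ d))
  have hlt (c : Fin 5) : (above c).card < 5 := by
    have : above c ⊂ Finset.univ := by
      refine Finset.ssubset_univ_iff.2 fun h => ?_
      have : c ∈ above c := h ▸ Finset.mem_univ c
      exact ((hmem c c).1 this).2 ((hmem c c).1 this).1
    simpa using Finset.card_lt_card this
  refine ⟨fun c => ⟨(above c).card, hlt c⟩, ?_⟩
  funext x y
  simp only [rankVote, Fin.mk_le_mk, eq_iff_iff]
  constructor
  · intro hxy
    refine Finset.card_le_card fun d hd => ?_
    rw [hmem] at hd ⊢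
    exact ⟨htrans hd.1 hxy, fun h => hd.2 (htrans hxy h)⟩
  · intro h
    by_contra hxy
    have hyx : v y x := (htot x y).resolve_left hxy
    refine absurd h (not_le.2 (Finset.card_lt_card ?_))
    refine Finset.ssubset_iff_of_subset (fun d hd => ?_) |>.2 ⟨y, ?_, ?_⟩
    · rw [hmem] at hd ⊢
      exact ⟨htrans hd.1 hyx, fun h => hd.2 (htrans hyx h)⟩
    · exact (hmem x y).2 ⟨hyx, hxy⟩
    · exact fun hy => ((hmem y y).1 hy).2 ((hmem y y).1 hy).1

/-- For the peak `p`, the ranks `x` and `y` of the neighbours `i` and `i + 1` on the axis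
increase away from `p`. -/
def PeakStep (p : Fin 5) (i : Fin 4) (x y : Fin 5) : Prop :=
  (i.succ ≤ p → y < x) ∧ (p ≤ i.castSucc → x < y)

instance (p : Fin 5) (i : Fin 4) (x y : Fin 5) : Decidable (PeakStep p i x y) := by
  unfold PeakStep
  infer_instance

theorem IsSinglePeaked.exists_peakStep {f : Fin 5 → Fin 5}
    (h : IsSinglePeaked (inferInstance : LinearOrder (Fin 5)) (rankVote f)) :
    ∃ p, ∀ i : Fin 4, PeakStep p i (f i.castSucc) (f i.succ) := by
  obtain ⟨p, hl, hr⟩ := h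
  exact ⟨p, fun i =>
    ⟨fun hi => (spref_rankVote f _ _).1 (hl _ _ i.castSucc_lt_succ hi),
      fun hi => (spref_rankVote f _ _).1 (hr _ _ hi i.castSucc_lt_succ)⟩⟩

/-- The leads of `p` over `a₁` and over `b₁` in a vote are those of one of the two votes
useful to the manipulators, or they are jointly too small. -/
def LeadsBounded (s : Fin 5 → ℚ) : Prop :=
  (s 1 - s 0 = 4 ∧ s 1 - s 2 = 1) ∨ (s 1 - s 0 = 1 ∧ s 1 - s 2 = 2) ∨
    (s 1 - s 0) + 3 * (s 1 - s 2) < 7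

instance (s : Fin 5 → ℚ) : Decidable (LeadsBounded s) := by
  unfold LeadsBounded
  infer_instance

theorem leadsBounded_rankScore {E : ScoreExt}
    (hE : E = ScoreExt.emax ∨ E = ScoreExt.eroundDown ∨ E = ScoreExt.eaverage)
    {f : Fin 5 → Fin 5} (hf : ∃ p, ∀ i : Fin 4, PeakStep p i (f i.castSucc) (f i.succ)) :
    LeadsBounded (rankScore E f) := by
  -- Testing each step as soon as its two ranks are chosen keeps the enumeration small.
  have enum : ∀ p a b, PeakStep p 0 a b → ∀ c, PeakStep p 1 b c → ∀ d, PeakStep p 2 c d →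
      ∀ e, PeakStep p 3 d e → LeadsBounded (rankScore E ![a, b, c, d, e]) := by
    rcases hE with rfl | rfl | rfl <;> decide +kernel
  have hfin : f = ![f 0, f 1, f 2, f 3, f 4] := by
    funext i
    fin_cases i <;> rfl
  obtain ⟨p, hp⟩ := hf
  rw [hfin]
  exact enum p _ _ (hp 0) _ (hp 1) _ (hp 2) _ (hp 3)

theorem leadsBounded_extScore {E : ScoreExt}
    (hE : E = ScoreExt.emax ∨ E = ScoreExt.eroundDown ∨ E = ScoreExt.eaverage)
    {v : Fin 5 → Fin 5 → Prop} (hv : IsWeakOrder v)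
    (hp : IsSinglePeaked (inferInstance : LinearOrder (Fin 5)) v) :
    LeadsBounded (extScore 5 scvec E v) := by
  obtain ⟨f, rfl⟩ := hv.exists_rankVote
  rw [funext (extScore_rankVote E f)]
  exact leadsBounded_rankScore hE hp.exists_peakStep

/-- The ranks of `p > b₁ > b₂ > b₃ > a₁`. -/
def rankLast : Fin 5 → Fin 5 := ![4, 0, 1, 2, 3]

/-- The ranks of `p > a₁ > b₁ > b₂ > b₃`. -/
def rankSecond : Fin 5 → Fin 5 := ![1, 0, 2, 3, 4]

theorem isSinglePeaked_rankVote_of_peak_one {f : Fin 5 → Fin 5}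
    (h : ∀ a b : Fin 5, (a < b → b ≤ 1 → f b < f a) ∧ (1 ≤ a → a < b → f a < f b)) :
    IsSinglePeaked (inferInstance : LinearOrder (Fin 5)) (rankVote f) :=
  ⟨1, fun a b hab hb => (spref_rankVote f _ _).2 ((h a b).1 hab hb),
    fun a b ha hab => (spref_rankVote f _ _).2 ((h a b).2 ha hab)⟩

theorem isSinglePeaked_rankLast :
    IsSinglePeaked (inferInstance : LinearOrder (Fin 5)) (rankVote rankLast) :=
  isSinglePeaked_rankVote_of_peak_one (by decide)

theorem isSinglePeaked_rankSecond :
    IsSinglePeaked (inferInstance : LinearOrder (Fin 5)) (rankVote rankSecond) :=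
  isSinglePeaked_rankVote_of_peak_one (by decide)

theorem voteA_eq_rankVote : voteA = rankVote id := rfl

theorem voteB_eq_rankVote : voteB = rankVote ![4, 3, 0, 1, 2] := by
  funext x y
  simp only [voteB, rankVote, eq_iff_iff]
  revert x y
  decide

theorem extScore_voteA {E : ScoreExt}
    (hE : E = ScoreExt.emax ∨ E = ScoreExt.eroundDown ∨ E = ScoreExt.eaverage)
    (d : Fin 5) :
    extScore 5 scvec E voteA d = (![4, 3, 2, 0, 0] : Fin 5 → ℚ) d := by
  rw [voteA_eq_rankVote, extScore_rankVote]
  revert d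
  rcases hE with rfl | rfl | rfl <;> decide +kernel

theorem extScore_voteB {E : ScoreExt}
    (hE : E = ScoreExt.emax ∨ E = ScoreExt.eroundDown ∨ E = ScoreExt.eaverage)
    (d : Fin 5) :
    extScore 5 scvec E voteB d = (![0, 0, 4, 3, 2] : Fin 5 → ℚ) d := by
  rw [voteB_eq_rankVote, extScore_rankVote]
  revert d
  rcases hE with rfl | rfl | rfl <;> decide +kernel

theorem extScore_rankLast {E : ScoreExt}
    (hE : E = ScoreExt.emax ∨ E = ScoreExt.eroundDown ∨ E = ScoreExt.eaverage)
    (d : Fin 5) :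
    extScore 5 scvec E (rankVote rankLast) d = (![0, 4, 3, 2, 0] : Fin 5 → ℚ) d := by
  rw [extScore_rankVote]
  revert d
  rcases hE with rfl | rfl | rfl <;> decide +kernel

theorem extScore_rankSecond {E : ScoreExt}
    (hE : E = ScoreExt.emax ∨ E = ScoreExt.eroundDown ∨ E = ScoreExt.eaverage)
    (d : Fin 5) :
    extScore 5 scvec E (rankVote rankSecond) d = (![3, 4, 2, 0, 0] : Fin 5 → ℚ) d := by
  rw [extScore_rankVote]
  revert d
  rcases hE with rfl | rfl | rfl <;> decide +kernel

theorem profScore_append_ofFn {E : ScoreExt}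
    (hE : E = ScoreExt.emax ∨ E = ScoreExt.eroundDown ∨ E = ScoreExt.eaverage)
    {t : ℕ} (ks : Fin t → ℕ) (K : ℕ) (tv : Fin t → Fin 5 → Fin 5 → Prop) (d : Fin 5) :
    profScore 5 scvec E
        ([(20 * K, voteA), (8 * K, voteB)] ++ List.ofFn (fun i => (4 * ks i, tv i))) d =
      K * (![80, 60, 72, 24, 16] : Fin 5 → ℚ) d +
        4 * ∑ i, (ks i : ℚ) * extScore 5 scvec E (tv i) d := by
  simp only [profScore, List.map_append, List.map_cons, List.map_nil, List.sum_append,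
    List.sum_cons, List.sum_nil, List.map_ofFn, List.sum_ofFn, Function.comp_apply,
    extScore_voteA hE, extScore_voteB hE, Finset.mul_sum]
  congr 1
  · fin_cases d <;> simp <;> ring
  · refine Finset.sum_congr rfl fun i _ => ?_
    push_cast
    ring

/-- If total leads of `5K` over `a₁` and `3K` over `b₁` are reached by votes with bounded
leads, then the votes with leads `4` and `1` carry exactly half of the weight. -/
theorem exists_subset_sum_of_leads {t : ℕ} {ks : Fin t → ℕ} (hks : ∀ i, 0 < ks i) {K : ℕ}
    (hsum : ∑ i, ks i = 2 * K) {s : Fin t → Fin 5 → ℚ} (hs : ∀ i, LeadsBounded (s i))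
    (ha : 5 * (K : ℚ) ≤ ∑ i, (ks i : ℚ) * (s i 1 - s i 0))
    (hb : 3 * (K : ℚ) ≤ ∑ i, (ks i : ℚ) * (s i 1 - s i 2)) :
    ∃ I : Finset (Fin t), ∑ i ∈ I, ks i = K := by
  have hsumQ : ∑ i, (ks i : ℚ) = 2 * K := by exact_mod_cast hsum
  have hle : ∀ i ∈ Finset.univ,
      (ks i : ℚ) * ((s i 1 - s i 0) + 3 * (s i 1 - s i 2)) ≤ ks i * 7 := by
    intro i _
    refine mul_le_mul_of_nonneg_left ?_ (Nat.cast_nonneg _)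
    rcases hs i with h | h | h <;> linarith
  have heq : ∑ i, (ks i : ℚ) * ((s i 1 - s i 0) + 3 * (s i 1 - s i 2)) =
      ∑ i, (ks i : ℚ) * 7 := by
    refine le_antisymm (Finset.sum_le_sum hle) ?_
    have : ∑ i, (ks i : ℚ) * ((s i 1 - s i 0) + 3 * (s i 1 - s i 2)) =
        ∑ i, (ks i : ℚ) * (s i 1 - s i 0) + 3 * ∑ i, (ks i : ℚ) * (s i 1 - s i 2) := by
      rw [Finset.mul_sum, ← Finset.sum_add_distrib]
      exact Finset.sum_congr rfl fun i _ => by ring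
    rw [this, ← Finset.sum_mul, hsumQ]
    linarith
  have htight (i : Fin t) : (s i 1 - s i 0 = 4 ∧ s i 1 - s i 2 = 1) ∨
      (s i 1 - s i 0 = 1 ∧ s i 1 - s i 2 = 2) := by
    have hi := (Finset.sum_eq_sum_iff_of_le hle).1 heq i (Finset.mem_univ i)
    have hpos : (ks i : ℚ) ≠ 0 := by exact_mod_cast (hks i).ne'
    have := mul_left_cancel₀ hpos hi
    rcases hs i with h | h | h
    · exact Or.inl h
    · exact Or.inr h
    · exact absurd this h.ne
  let I : Finset (Fin t) := Finset.univ.filter fun i => s i 1 - s i 0 = 4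
  have hIa : ∑ i, (ks i : ℚ) * (s i 1 - s i 0) = 3 * ∑ i ∈ I, (ks i : ℚ) + 2 * K := by
    rw [← hsumQ, Finset.sum_filter, Finset.mul_sum, ← Finset.sum_add_distrib]
    refine Finset.sum_congr rfl fun i _ => ?_
    rcases htight i with h | h <;> simp only [h.1] <;> norm_num <;> ring
  have hIb : ∑ i, (ks i : ℚ) * (s i 1 - s i 2) = 4 * K - ∑ i ∈ I, (ks i : ℚ) := by
    have : (4 : ℚ) * K = 2 * ∑ i, (ks i : ℚ) := by rw [hsumQ]; ring
    rw [this, Finset.sum_filter, Finset.mul_sum, ← Finset.sum_sub_distrib]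
    refine Finset.sum_congr rfl fun i _ => ?_
    rcases htight i with h | h <;> simp only [h.1, h.2] <;> norm_num <;> ring
  refine ⟨I, ?_⟩
  have : ∑ i ∈ I, (ks i : ℚ) = K := by linarith
  exact_mod_cast this

/-- Fix a scoring-rule extension `E` among max, round down, and average.
With nonmanipulators of weight `20K` voting `a₁ > p > b₁ > b₂ > b₃` and of weight `8K`
voting `b₁ > b₂ > b₃ > p > a₁`, and manipulators of weights `4k₁, ..., 4kₜ` (where
`k₁ + ... + kₜ = 2K`, `K ≥ 1`, each `kᵢ > 0`), the manipulators can cast weak-order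
votes, single-peaked w.r.t. the axis `a₁ L p L b₁ L b₂ L b₃`, that make `p` a winner
under `⟨4,3,2,0,0⟩` with extension `E` iff some subcollection of the `kᵢ` sums to `K`. -/
theorem manipulation_43200_weak_orders_iff_partition
    (E : ScoreExt)
    (hE : E = ScoreExt.emax ∨ E = ScoreExt.eroundDown ∨ E = ScoreExt.eaverage)
    (t : ℕ) (ks : Fin t → ℕ) (hks : ∀ i, 0 < ks i) (K : ℕ) (hK : 1 ≤ K)
    (hsum : ∑ i, ks i = 2 * K) :
    (∃ tv : Fin t → (Fin 5 → Fin 5 → Prop),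
      (∀ i, IsWeakOrder (tv i) ∧
        IsSinglePeaked (inferInstance : LinearOrder (Fin 5)) (tv i)) ∧
      (∀ d : Fin 5,
        profScore 5 scvec E
            ([(20 * K, voteA), (8 * K, voteB)] ++ List.ofFn (fun i => (4 * ks i, tv i))) d ≤
          profScore 5 scvec E
            ([(20 * K, voteA), (8 * K, voteB)] ++ List.ofFn (fun i => (4 * ks i, tv i)))
            (1 : Fin 5))) ↔
    (∃ I : Finset (Fin t), ∑ i ∈ I, ks i = K) := by
  constructor
  · rintro ⟨tv, htv, hwin⟩
    have ha := hwin 0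
    have hb := hwin 2
    simp only [profScore_append_ofFn hE] at ha hb
    refine exists_subset_sum_of_leads hks hsum
      (fun i => leadsBounded_extScore hE (htv i).1 (htv i).2) ?_ ?_ <;>
    · simp only [mul_sub, Finset.sum_sub_distrib]
      simp at ha hb
      linarith
  · rintro ⟨I, hI⟩
    refine ⟨fun i => if i ∈ I then rankVote rankLast else rankVote rankSecond,
      fun i => ?_, fun d => ?_⟩
    · dsimp only
      split_ifs
      · exact ⟨isWeakOrder_rankVote _, isSinglePeaked_rankLast⟩
      · exact ⟨isWeakOrder_rankVote _, isSinglePeaked_rankSecond⟩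
    · have hIQ : ∑ i ∈ I, (ks i : ℚ) = K := by exact_mod_cast hI
      have hIcQ : ∑ i ∈ Iᶜ, (ks i : ℚ) = K := by
        have h := Finset.sum_add_sum_compl I fun i => (ks i : ℚ)
        have hsumQ : ∑ i, (ks i : ℚ) = 2 * K := by exact_mod_cast hsum
        linarith
      have key (c : Fin 5) :
          ∑ i, (ks i : ℚ) * extScore 5 scvec E
              (if i ∈ I then rankVote rankLast else rankVote rankSecond) c =
            K * ((![0, 4, 3, 2, 0] : Fin 5 → ℚ) c + (![3, 4, 2, 0, 0] : Fin 5 → ℚ) c) := by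
        rw [← Finset.sum_add_sum_compl I, mul_add]
        nth_rewrite 1 [← hIQ]
        rw [← hIcQ, Finset.sum_mul, Finset.sum_mul]
        congr 1 <;> refine Finset.sum_congr rfl fun i hi => ?_
        · rw [if_pos hi, extScore_rankLast hE]
        · rw [if_neg (Finset.mem_compl.1 hi), extScore_rankSecond hE]
      have hK0 : (0 : ℚ) ≤ K := Nat.cast_nonneg K
      rw [profScore_append_ofFn hE, profScore_append_ofFn hE, key, key]
      fin_cases d <;> simp <;> linarith
end
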